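/- arXiv:1805.08188 — 3 statements merged into one kernel-verified Lean document; each statement's English description precedes it below -/
import Mathlib

section
/- Let H be a complex separable infinite-dimensional Hilbert space and let S = (S_1, …, S_s) be an s-tuple of bounded selfadjoint operators on H, so that W_e(S) is a subset of ℝ^s. Let (λ_k)_{k≥1} be a sequence contained in the interior of W_e(S) relative to ℝ^s, and suppose that ∑_{k=1}^∞ dist(λ_k, ℝ^s ∖ W_e(S)) = ∞. Then there exists an orthonormal basis (u_k)_{k≥1} of H such that ⟨S_j u_k, u_k⟩ = λ_{k,j} for every k ≥ 1 and every j = 1, …, s. -/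
open Filter Metric
open scoped ComplexInnerProductSpace

/-- The joint essential numerical range of a tuple of selfadjoint operators,
viewed as a subset of `ℝ^s`: the set of `λ ∈ ℝ^s` for which there is an orthonormal
sequence `(x_k)` with `⟨S_j x_k, x_k⟩ → λ_j` for every `j`. -/
def jointEssNumRangeReal {H : Type*} [NormedAddCommGroup H] [InnerProductSpace ℂ H]
    {s : ℕ} (S : Fin s → H →L[ℂ] H) : Set (Fin s → ℝ) :=
  {lam | ∃ x : ℕ → H, Orthonormal ℂ x ∧
    ∀ j, Tendsto (fun k => ⟪(S j) (x k), x k⟫) atTop (nhds ((lam j : ℂ)))}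

/-!
Suppose `u₀, …, uₖ₋₁` are already constructed and let `M` be their span. Given a vector `y` with
normalized residual `e ∈ Mᗮ`, look for `uₖ = √c e + √(1 - c) v`, where `v` is orthogonal to `M`, `e`
and all `Sⱼ e`. Then `⟨Sⱼ uₖ, uₖ⟩ = c ⟨Sⱼ e, e⟩ + (1 - c) ⟨Sⱼ v, v⟩`, so the prescribed value `λₖ`
is reached as soon as `v` attains a certain point `ν` near `λₖ`, and `ν` stays in the interior of
`W_e(S)` for some `c` comparable to `dist(λₖ, ℝˢ \ W_e(S))`. Interior points are attained exactly by
the same superposition, applied to approximate realizations of the corners of a small cube.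

The vector `uₖ` captures a proportion `c` of the squared residual of `y`. Take `y` from a square
summable total sequence `(yₘ)`, each time with an almost maximal residual: by Bessel's inequality
`∑ₖ ∑ₘ |⟨uₖ, yₘ⟩|² ≤ ∑ₘ ‖yₘ‖² < ∞`, so divergence of `∑ₖ dist(λₖ, ℝˢ \ W_e(S))` forces all
residuals to tend to `0`.
-/

theorem exists_seq_forall_image_Iio {α : Type*} {P : ℕ → Set α → α → Prop}
    (h : ∀ k F, F.Finite → ∃ a, P k F a) : ∃ u : ℕ → α, ∀ k, P k (u '' Set.Iio k) (u k) := by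
  have : Nonempty α := (h 0 ∅ Set.finite_empty).nonempty
  choose! g hg using h
  let next (k : ℕ) (prev : ∀ i < k, α) : α := g k (Set.range fun i : Set.Iio k => prev i i.2)
  let u (k : ℕ) : α := Nat.strongRecOn k next
  have hu (k : ℕ) : u k = g k (u '' Set.Iio k) := by
    rw [Set.image_eq_range]
    exact Nat.strongRecOn_eq next k
  refine ⟨u, fun k => ?_⟩
  rw [hu k]
  exact hg k _ ((Set.finite_Iio k).image u)

theorem exists_forall_le_two_mul {ι : Type*} [Nonempty ι] {g : ι → ℝ} (hg0 : ∀ i, 0 ≤ g i)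
    (hg : BddAbove (Set.range g)) : ∃ i, ∀ l, g l ≤ 2 * g i := by
  rcases (Real.iSup_nonneg hg0).eq_or_lt with hsup | hsup
  · have hzero (l : ι) : g l ≤ 0 := hsup ▸ le_ciSup hg l
    exact ⟨Classical.arbitrary ι, fun l => by linarith [hzero l, hg0 (Classical.arbitrary ι)]⟩
  · obtain ⟨i, hi⟩ := exists_lt_of_lt_ciSup (half_lt_self hsup)
    exact ⟨i, fun l => by linarith [le_ciSup hg l]⟩

section Convexity

theorem mem_convexHull_range_iff_exists_stdSimplex {ι E : Type*} [Fintype ι] [AddCommGroup E]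
    [Module ℝ E] {q : ι → E} {x : E} :
    x ∈ convexHull ℝ (Set.range q) ↔ ∃ w ∈ stdSimplex ℝ ι, ∑ i, w i • q i = x := by
  classical
  have hq : Set.range q
      = Fintype.linearCombination ℝ q '' Set.range fun i => Pi.single i (1 : ℝ) := by
    rw [← Set.range_comp]
    congr 1
    ext i
    simp [Fintype.linearCombination_apply_single]
  rw [hq, ← LinearMap.image_convexHull, convexHull_rangle_single_eq_stdSimplex ℝ ι]
  simp only [Set.mem_image, Fintype.linearCombination_apply]

theorem mem_convexHull_of_forall_exists_le {E : Type*} [AddCommGroup E] [Module ℝ E]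
    [TopologicalSpace E] [IsTopologicalAddGroup E] [ContinuousSMul ℝ E] [LocallyConvexSpace ℝ E]
    [T2Space E] {T : Set E} (hT : T.Finite) {x : E} (h : ∀ f : E →L[ℝ] ℝ, ∃ q ∈ T, f x ≤ f q) :
    x ∈ convexHull ℝ T := by
  by_contra hx
  obtain ⟨f, a, hlt, ha⟩ :=
    geometric_hahn_banach_closed_point (convex_convexHull ℝ T) (hT.isClosed_convexHull ℝ) hx
  obtain ⟨q, hq, hle⟩ := h f
  linarith [hlt q (subset_convexHull ℝ T hq)]

theorem mem_convexHull_range_of_orthants {ι : Type*} [Finite ι] {x : ι → ℝ}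
    {q : Set ι → ι → ℝ} (hge : ∀ A, ∀ i ∈ A, x i ≤ q A i) (hle : ∀ A, ∀ i ∉ A, q A i ≤ x i) :
    x ∈ convexHull ℝ (Set.range q) := by
  classical
  have := Fintype.ofFinite ι
  refine mem_convexHull_of_forall_exists_le (Set.finite_range q) fun f => ?_
  let A : Set ι := {i | 0 ≤ f (Pi.single i 1)}
  have hf (v : ι → ℝ) : f v = ∑ i, v i * f (Pi.single i 1) := by
    conv_lhs => rw [pi_eq_sum_univ' v]
    simp only [map_sum, map_smul, smul_eq_mul]
  refine ⟨q A, Set.mem_range_self A, ?_⟩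
  rw [hf x, hf (q A)]
  refine Finset.sum_le_sum fun i _ => ?_
  by_cases hi : i ∈ A
  · exact mul_le_mul_of_nonneg_right (hge A i hi) hi
  · exact mul_le_mul_of_nonpos_right (hle A i hi) (not_le.1 hi).le

variable {E : Type*} [NormedAddCommGroup E] [NormedSpace ℝ E] {W : Set E} {K : ℝ} {x : E}

theorem infDist_compl_le_of_subset_closedBall (hW : W ⊆ closedBall 0 K) (hx : x ∈ W) :
    infDist x Wᶜ ≤ K := by
  have hK : 0 ≤ K := nonempty_closedBall.1 ⟨x, hW hx⟩
  rcases subsingleton_or_nontrivial E with hE | hE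
  · have hcompl : Wᶜ = ∅ := by
      rw [Set.Nonempty.eq_univ (s := W) ⟨x, hx⟩,
        Set.compl_univ]
    rwa [hcompl, infDist_empty]
  · have hdiam : diam (ball x (infDist x Wᶜ)) ≤ diam (closedBall (0 : E) K) :=
      diam_mono (ball_infDist_compl_subset.trans hW) isBounded_closedBall
    rw [diam_ball_eq x infDist_nonneg, diam_closedBall_eq 0 hK] at hdiam
    linarith

theorem exists_convexCombo_mem_interior (hW : W ⊆ closedBall 0 K) (hx : x ∈ interior W) :
    ∃ c, 0 ≤ c ∧ c < 1 ∧ infDist x Wᶜ ≤ 4 * K * c ∧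
      ∀ b ∈ closedBall (0 : E) K, ∃ z ∈ interior W, c • b + (1 - c) • z = x := by
  have hdK := infDist_compl_le_of_subset_closedBall hW (interior_subset hx)
  set d := infDist x Wᶜ
  rcases (infDist_nonneg : 0 ≤ d).eq_or_lt with h0 | hpos
  · exact ⟨0, le_rfl, one_pos, by linarith, fun b _ => ⟨x, hx, by simp⟩⟩
  have hK : 0 < K := hpos.trans_le hdK
  have hcd : 4 * K * (d / (4 * K)) = d := mul_div_cancel₀ d (by positivity)
  set c := d / (4 * K)
  have hc0 : 0 ≤ c := by positivity
  have hc1 : c ≤ 1 / 4 := by nlinarith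
  refine ⟨c, hc0, by linarith, hcd.ge, fun b hb => ⟨x + (c / (1 - c)) • (x - b), ?_, ?_⟩⟩
  · refine interior_maximal ball_infDist_compl_subset isOpen_ball (?_ : _ ∈ ball x d)
    have hxb : ‖x - b‖ ≤ 2 * K := by
      have hxK := mem_closedBall_zero_iff.1 (hW (interior_subset hx))
      linarith [norm_sub_le x b, mem_closedBall_zero_iff.1 hb]
    rw [mem_ball_iff_norm, add_sub_cancel_left, norm_smul,
      Real.norm_of_nonneg (div_nonneg hc0 (by linarith)), div_mul_eq_mul_div,
      div_lt_iff₀ (by linarith)]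
    nlinarith [mul_le_mul_of_nonneg_left hxb hc0]
  · have hc : (1 - c) * (c / (1 - c)) = c := mul_div_cancel₀ c (by linarith)
    rw [smul_add, smul_smul, hc]
    module

end Convexity

section InnerProductSpace

variable {𝕜 E ι κ : Type*} [RCLike 𝕜] [NormedAddCommGroup E] [InnerProductSpace 𝕜 E]

theorem orthonormal_of_mem_orthogonal_span_image_Iio {u : ℕ → E} (hnorm : ∀ k, ‖u k‖ = 1)
    (horth : ∀ k, u k ∈ (Submodule.span 𝕜 (u '' Set.Iio k))ᗮ) : Orthonormal 𝕜 u := by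
  have : Std.Symm fun i k => inner 𝕜 (u i) (u k) = 0 := ⟨fun _ _ => inner_eq_zero_symm.1⟩
  exact ⟨hnorm, Pairwise.of_lt fun i k hik =>
    (Submodule.mem_orthogonal _ _).1 (horth k) _
      (Submodule.subset_span (Set.mem_image_of_mem u hik))⟩

theorem tendsto_inner_of_orthonormal {x : ℕ → E} (hx : Orthonormal 𝕜 x) (y : E) :
    Tendsto (fun k => inner 𝕜 y (x k)) atTop (nhds 0) := by
  have hsq := (hx.inner_products_summable y).tendsto_atTop_zero.sqrt
  simp only [Real.sqrt_sq (norm_nonneg _), Real.sqrt_zero] at hsq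
  rw [tendsto_zero_iff_norm_tendsto_zero]
  simpa only [norm_inner_symm] using hsq

theorem tendsto_starProjection_of_orthonormal {x : ℕ → E} (hx : Orthonormal 𝕜 x)
    (M : Submodule 𝕜 E) [FiniteDimensional 𝕜 M] :
    Tendsto (fun k => M.starProjection (x k)) atTop (nhds 0) := by
  let b := stdOrthonormalBasis 𝕜 M
  have hexpand (k : ℕ) : M.starProjection (x k) = ∑ i, inner 𝕜 (b i : E) (x k) • (b i : E) := by
    simp [b.starProjection_eq_sum_rankOne]
  simp_rw [hexpand]
  rw [show (0 : E) = ∑ i, (0 : 𝕜) • (b i : E) by simp]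
  exact tendsto_finsetSum _ fun i _ => (tendsto_inner_of_orthonormal hx _).smul_const _

theorem exists_unit_mem_orthogonal_norm_sub_le (M : Submodule 𝕜 E) [M.HasOrthogonalProjection]
    {x : E} (hx : ‖x‖ = 1) (hMx : ‖M.starProjection x‖ < 1) :
    ∃ z ∈ Mᗮ, ‖z‖ = 1 ∧ ‖z - x‖ ≤ 2 * ‖M.starProjection x‖ := by
  set b := x - M.starProjection x with hb
  have hbx : |‖b‖ - 1| ≤ ‖M.starProjection x‖ := by
    simpa [hb, hx] using abs_norm_sub_norm_le b x
  have hb0 : 0 < ‖b‖ := by linarith [(abs_le.1 hbx).1]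
  have hbz : ‖((‖b‖⁻¹ : ℝ) : 𝕜) • b - b‖ = |‖b‖ - 1| := by
    have hcoeff : ((‖b‖⁻¹ : ℝ) : 𝕜) • b - b = ((‖b‖⁻¹ - 1 : ℝ) : 𝕜) • b := by
      rw [RCLike.ofReal_sub, RCLike.ofReal_one, sub_smul, one_smul]
    rw [hcoeff, norm_smul, RCLike.norm_ofReal, ← abs_norm b, ← abs_mul, abs_norm, sub_mul,
      inv_mul_cancel₀ hb0.ne', one_mul, abs_sub_comm]
  refine ⟨((‖b‖⁻¹ : ℝ) : 𝕜) • b,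
    Submodule.smul_mem _ _ (Submodule.sub_starProjection_mem_orthogonal x), ?_, ?_⟩
  · rw [norm_smul, RCLike.norm_ofReal, abs_of_pos (inv_pos.2 hb0), inv_mul_cancel₀ hb0.ne']
  · calc ‖((‖b‖⁻¹ : ℝ) : 𝕜) • b - x‖
        ≤ ‖((‖b‖⁻¹ : ℝ) : 𝕜) • b - b‖ + ‖b - x‖ := norm_sub_le_norm_sub_add_norm_sub _ _ _
      _ ≤ 2 * ‖M.starProjection x‖ := by
        rw [hbz, hb, sub_sub_cancel_left, norm_neg]
        linarith

theorem norm_inner_map_self_sub_le (T : E →L[𝕜] E) (x y : E) :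
    ‖inner 𝕜 (T y) y - inner 𝕜 (T x) x‖ ≤ ‖T‖ * ‖y - x‖ * (‖x‖ + ‖y‖) := by
  have hsplit : inner 𝕜 (T y) y - inner 𝕜 (T x) x
      = inner 𝕜 (T (y - x)) y + inner 𝕜 (T x) (y - x) := by
    simp only [map_sub, inner_sub_left, inner_sub_right]
    ring
  calc ‖inner 𝕜 (T y) y - inner 𝕜 (T x) x‖
      ≤ ‖T (y - x)‖ * ‖y‖ + ‖T x‖ * ‖y - x‖ := by
        rw [hsplit]
        exact norm_add_le_of_le (norm_inner_le_norm _ _) (norm_inner_le_norm _ _)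
    _ ≤ (‖T‖ * ‖y - x‖) * ‖y‖ + (‖T‖ * ‖x‖) * ‖y - x‖ := by
        gcongr <;> exact T.le_opNorm _
    _ = ‖T‖ * ‖y - x‖ * (‖x‖ + ‖y‖) := by ring

theorem inner_map_sum_sqrt_smul [Fintype ι] (T : E →ₗ[𝕜] E) {x : ι → E}
    (hx : Pairwise fun i l => inner 𝕜 (T (x i)) (x l) = 0) {w : ι → ℝ} (hw : ∀ i, 0 ≤ w i) :
    inner 𝕜 (T (∑ i, (√(w i) : 𝕜) • x i)) (∑ i, (√(w i) : 𝕜) • x i)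
      = ∑ i, (w i : 𝕜) * inner 𝕜 (T (x i)) (x i) := by
  rw [map_sum, sum_inner]
  refine Finset.sum_congr rfl fun i _ => ?_
  rw [map_smul, inner_smul_left, inner_sum, Finset.sum_eq_single i]
  · rw [inner_smul_right, RCLike.conj_ofReal, ← mul_assoc, ← RCLike.ofReal_mul,
      Real.mul_self_sqrt (hw i)]
  · intro l _ hl
    rw [inner_smul_right, hx hl.symm, mul_zero]
  · simp

theorem exists_summable_norm_sq_dense_span [TopologicalSpace.SeparableSpace E] :
    ∃ y : ℕ → E, Summable (fun m => ‖y m‖ ^ 2) ∧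
      Dense (Submodule.span 𝕜 (Set.range y) : Set E) := by
  let d := TopologicalSpace.denseSeq E
  let a (m : ℕ) : ℝ := (1 / 2) ^ m / (1 + ‖d m‖)
  have ha (m : ℕ) : 0 < a m := by positivity
  have hnorm (m : ℕ) : ‖(a m : 𝕜) • d m‖ ≤ (1 / 2) ^ m := by
    rw [norm_smul, RCLike.norm_ofReal, abs_of_pos (ha m), div_mul_eq_mul_div,
      div_le_iff₀ (by positivity)]
    gcongr
    linarith
  refine ⟨fun m => (a m : 𝕜) • d m, ?_, ?_⟩
  · refine Summable.of_nonneg_of_le (fun _ => sq_nonneg _) (fun m => ?_)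
      (summable_geometric_of_lt_one (r := (1 / 2) ^ 2) (by norm_num) (by norm_num))
    rw [← pow_mul, mul_comm 2 m, pow_mul]
    exact pow_le_pow_left₀ (norm_nonneg _) (hnorm m) 2
  · refine (TopologicalSpace.denseRange_denseSeq E).mono ?_
    rintro _ ⟨m, rfl⟩
    refine (Submodule.smul_mem_iff _ (RCLike.ofReal_ne_zero (K := 𝕜)|>.2 (ha m).ne')).1 ?_
    exact Submodule.subset_span ⟨m, rfl⟩

theorem sum_norm_inner_sq_le_tsum_norm_sq {u : κ → E} (hu : Orthonormal 𝕜 u) {y : ι → E}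
    (hy : Summable fun i => ‖y i‖ ^ 2) (m : κ → ι) (s : Finset κ) :
    ∑ k ∈ s, ‖inner 𝕜 (u k) (y (m k))‖ ^ 2 ≤ ∑' i, ‖y i‖ ^ 2 := by
  classical
  calc ∑ k ∈ s, ‖inner 𝕜 (u k) (y (m k))‖ ^ 2
      = ∑ i ∈ s.image m, ∑ k ∈ s with m k = i, ‖inner 𝕜 (u k) (y (m k))‖ ^ 2 :=
        (Finset.sum_fiberwise_of_maps_to (fun _ => Finset.mem_image_of_mem m) _).symm
    _ ≤ ∑ i ∈ s.image m, ‖y i‖ ^ 2 := by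
        refine Finset.sum_le_sum fun i _ => ?_
        rw [Finset.sum_congr rfl fun k hk => by rw [(Finset.mem_filter.1 hk).2]]
        exact hu.sum_inner_products_le (y i)
    _ ≤ ∑' i, ‖y i‖ ^ 2 := hy.sum_le_tsum _ fun i _ => sq_nonneg _

theorem mem_topologicalClosure_span_of_infDist_sq_le {u : ℕ → E} (hu : Orthonormal 𝕜 u)
    {y : ι → E} (hy : Summable fun i => ‖y i‖ ^ 2) {d : ℕ → ℝ}
    (hd : Tendsto (fun N => ∑ k ∈ Finset.range N, d k) atTop atTop) {C : ℝ} (hC : 0 ≤ C)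
    (m : ℕ → ι) {x : E} (hx : ∀ k, d k * infDist x (Submodule.span 𝕜 (Set.range u)) ^ 2
      ≤ C * ‖inner 𝕜 (u k) (y (m k))‖ ^ 2) :
    x ∈ (Submodule.span 𝕜 (Set.range u)).topologicalClosure := by
  rw [← SetLike.mem_coe, Submodule.topologicalClosure_coe,
    mem_closure_iff_infDist_zero (Submodule.nonempty _)]
  by_contra hne
  have hpos : 0 < infDist x (Submodule.span 𝕜 (Set.range u)) ^ 2 := by positivity
  obtain ⟨N, hN⟩ := ((hd.atTop_mul_const hpos).eventually_gt_atTop (C * ∑' i, ‖y i‖ ^ 2)).exists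
  refine hN.not_ge ?_
  rw [Finset.sum_mul]
  calc ∑ k ∈ Finset.range N, d k * infDist x (Submodule.span 𝕜 (Set.range u)) ^ 2
      ≤ ∑ k ∈ Finset.range N, C * ‖inner 𝕜 (u k) (y (m k))‖ ^ 2 :=
        Finset.sum_le_sum fun k _ => hx k
    _ ≤ C * ∑' i, ‖y i‖ ^ 2 := by
        rw [← Finset.mul_sum]
        exact mul_le_mul_of_nonneg_left (sum_norm_inner_sq_le_tsum_norm_sq hu hy m _) hC

end InnerProductSpace

section JointQuadraticForm

variable {𝕜 E ι κ : Type*} [RCLike 𝕜] [NormedAddCommGroup E] [InnerProductSpace 𝕜 E]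
  {S : κ → E →L[𝕜] E}

/-- The point `(Re ⟨S_j x, x⟩)_j` of `ℝ^κ`. For unit `x` and selfadjoint `S_j` these points form the
joint numerical range of `S`. -/
def jointQuadForm (S : κ → E →L[𝕜] E) (x : E) (j : κ) : ℝ :=
  (S j).reApplyInnerSelf x

theorem norm_jointQuadForm_le [Fintype κ] {x : E} (hx : ‖x‖ = 1) : ‖jointQuadForm S x‖ ≤ ‖S‖ := by
  refine (pi_norm_le_iff_of_nonneg (norm_nonneg S)).2 fun j => ?_
  calc ‖jointQuadForm S x j‖
      ≤ ‖inner 𝕜 (S j x) x‖ := RCLike.norm_re_le_norm _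
    _ ≤ ‖S j x‖ * ‖x‖ := norm_inner_le_norm _ _
    _ ≤ ‖S j‖ := by simpa only [hx, mul_one] using (S j).le_opNorm x
    _ ≤ ‖S‖ := norm_le_pi_norm S j

/-- `y` is orthogonal to `x` and to every `S_j x`. For selfadjoint `S_j` this makes the squared norm
and all the forms `x ↦ ⟨S_j x, x⟩` additive on superpositions of `x` and `y`. -/
def Decoupled (S : κ → E →L[𝕜] E) (x y : E) : Prop :=
  inner 𝕜 x y = 0 ∧ ∀ j, inner 𝕜 (S j x) y = 0

theorem Decoupled.symm (hS : ∀ j, (S j : E →ₗ[𝕜] E).IsSymmetric) {x y : E} (h : Decoupled S x y) :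
    Decoupled S y x :=
  ⟨inner_eq_zero_symm.1 h.1, fun j => (hS j y x).trans (inner_eq_zero_symm.1 (h.2 j))⟩

theorem pairwise_decoupled_of_lt [LinearOrder ι] (hS : ∀ j, (S j : E →ₗ[𝕜] E).IsSymmetric)
    {x : ι → E} (h : ∀ i l, i < l → Decoupled S (x i) (x l)) :
    Pairwise fun i l => Decoupled S (x i) (x l) := by
  have : Std.Symm fun i l => Decoupled S (x i) (x l) := ⟨fun _ _ => Decoupled.symm hS⟩
  exact Pairwise.of_lt h

theorem exists_le_forall_decoupled [Finite κ] (S : κ → E →L[𝕜] E) (M : Submodule 𝕜 E)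
    [FiniteDimensional 𝕜 M] {F : Set E} (hF : F.Finite) :
    ∃ N : Submodule 𝕜 E, FiniteDimensional 𝕜 N ∧ M ≤ N ∧ ∀ x ∈ F, ∀ y ∈ Nᗮ, Decoupled S x y := by
  let G : Set E := F ∪ ⋃ j, S j '' F
  have : FiniteDimensional 𝕜 (Submodule.span 𝕜 G) :=
    FiniteDimensional.span_of_finite 𝕜 (hF.union (Set.finite_iUnion fun j => hF.image _))
  have hG {g y : E} (hg : g ∈ G) (hy : y ∈ (M ⊔ Submodule.span 𝕜 G)ᗮ) : inner 𝕜 g y = 0 :=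
    (Submodule.mem_orthogonal _ _).1 hy g (le_sup_right (a := M) (Submodule.subset_span hg))
  refine ⟨M ⊔ Submodule.span 𝕜 G, inferInstance, le_sup_left, fun x hx y hy => ⟨?_, fun j => ?_⟩⟩
  · exact hG (Or.inl hx) hy
  · exact hG (Or.inr (Set.mem_iUnion.2 ⟨j, Set.mem_image_of_mem _ hx⟩)) hy

theorem exists_unit_mem_span_jointQuadForm_eq [Fintype ι] {x : ι → E} (hnorm : ∀ i, ‖x i‖ = 1)
    (hx : Pairwise fun i l => Decoupled S (x i) (x l)) {w : ι → ℝ} (hw : w ∈ stdSimplex ℝ ι) :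
    ∃ u ∈ Submodule.span 𝕜 (Set.range x), ‖u‖ = 1 ∧
      jointQuadForm S u = ∑ i, w i • jointQuadForm S (x i) ∧
      ∀ i, inner 𝕜 (x i) u = (√(w i) : 𝕜) := by
  have hortho : Orthonormal 𝕜 x := ⟨hnorm, fun i l hil => (hx hil).1⟩
  refine ⟨∑ i, (√(w i) : 𝕜) • x i, ?_, ?_, ?_, fun i => ?_⟩
  · exact sum_mem fun i _ => Submodule.smul_mem _ _ (Submodule.subset_span (Set.mem_range_self i))
  · have hself := inner_map_sum_sqrt_smul LinearMap.id (fun i l hil => (hx hil).1) hw.1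
    simp only [LinearMap.id_coe, id_eq, inner_self_eq_norm_sq_to_K, hnorm] at hself
    have hsum : ∑ i, (w i : 𝕜) = 1 := by exact_mod_cast hw.2
    rw [RCLike.ofReal_one, one_pow] at hself
    simp only [mul_one, hsum] at hself
    exact (pow_eq_one_iff_of_nonneg (norm_nonneg _) two_ne_zero).1 (by exact_mod_cast hself)
  · ext j
    have hform : inner 𝕜 (S j (∑ i, (√(w i) : 𝕜) • x i)) (∑ i, (√(w i) : 𝕜) • x i)
        = ∑ i, (w i : 𝕜) * inner 𝕜 (S j (x i)) (x i) :=
      inner_map_sum_sqrt_smul (S j : E →ₗ[𝕜] E) (fun i l hil => (hx hil).2 j) hw.1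
    rw [jointQuadForm, ContinuousLinearMap.reApplyInnerSelf_apply, hform]
    simp only [jointQuadForm, ContinuousLinearMap.reApplyInnerSelf_apply, map_sum,
      RCLike.re_ofReal_mul, Finset.sum_apply, Pi.smul_apply, smul_eq_mul]
  · exact hortho.inner_right_fintype _ i

theorem dist_jointQuadForm_le [Fintype κ] {x y : E} (hx : ‖x‖ = 1) (hy : ‖y‖ = 1) :
    dist (jointQuadForm S y) (jointQuadForm S x) ≤ 2 * ‖S‖ * ‖y - x‖ := by
  refine (dist_pi_le_iff (by positivity)).2 fun j => ?_
  calc dist (jointQuadForm S y j) (jointQuadForm S x j)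
      ≤ ‖inner 𝕜 (S j y) y - inner 𝕜 (S j x) x‖ := by
        simpa only [Real.dist_eq, jointQuadForm, ContinuousLinearMap.reApplyInnerSelf_apply,
          map_sub] using RCLike.abs_re_le_norm (inner 𝕜 (S j y) y - inner 𝕜 (S j x) x)
    _ ≤ ‖S j‖ * ‖y - x‖ * (‖x‖ + ‖y‖) := norm_inner_map_self_sub_le (S j) x y
    _ ≤ ‖S‖ * ‖y - x‖ * (‖x‖ + ‖y‖) := by
        gcongr
        exact norm_le_pi_norm S j
    _ = 2 * ‖S‖ * ‖y - x‖ := by rw [hx, hy]; ring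

end JointQuadraticForm

section JointEssNumRange

variable {H : Type*} [NormedAddCommGroup H] [InnerProductSpace ℂ H] {s : ℕ}
  {S : Fin s → H →L[ℂ] H} {μ : Fin s → ℝ}

theorem exists_orthonormal_tendsto_jointQuadForm (hμ : μ ∈ jointEssNumRangeReal S) :
    ∃ x : ℕ → H, Orthonormal ℂ x ∧ Tendsto (fun k => jointQuadForm S (x k)) atTop (nhds μ) := by
  obtain ⟨x, hx, hlim⟩ := hμ
  exact ⟨x, hx, tendsto_pi_nhds.2 fun j => (Complex.continuous_re.tendsto _).comp (hlim j)⟩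

theorem jointEssNumRangeReal_subset_closedBall (S : Fin s → H →L[ℂ] H) :
    jointEssNumRangeReal S ⊆ closedBall 0 ‖S‖ := by
  intro μ hμ
  obtain ⟨x, hx, hlim⟩ := exists_orthonormal_tendsto_jointQuadForm hμ
  exact isClosed_closedBall.mem_of_tendsto hlim (Eventually.of_forall fun k =>
    mem_closedBall_zero_iff.2 (norm_jointQuadForm_le (hx.1 k)))

theorem exists_unit_mem_orthogonal_dist_jointQuadForm_lt (hμ : μ ∈ jointEssNumRangeReal S)
    (M : Submodule ℂ H) [FiniteDimensional ℂ M] {ε : ℝ} (hε : 0 < ε) :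
    ∃ x ∈ Mᗮ, ‖x‖ = 1 ∧ dist (jointQuadForm S x) μ < ε := by
  obtain ⟨x, hx, hlim⟩ := exists_orthonormal_tendsto_jointQuadForm hμ
  have hproj : Tendsto (fun k => ‖M.starProjection (x k)‖) atTop (nhds 0) :=
    tendsto_zero_iff_norm_tendsto_zero.1 (tendsto_starProjection_of_orthonormal hx M)
  have herr : Tendsto (fun k => 2 * ‖S‖ * (2 * ‖M.starProjection (x k)‖)
      + dist (jointQuadForm S (x k)) μ) atTop (nhds 0) := by
    simpa only [mul_zero, add_zero] using
      ((hproj.const_mul 2).const_mul (2 * ‖S‖)).add (tendsto_iff_dist_tendsto_zero.1 hlim)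
  obtain ⟨k, hk1, hkε⟩ :=
    ((hproj.eventually_lt_const one_pos).and (herr.eventually_lt_const hε)).exists
  obtain ⟨z, hzM, hz, hzx⟩ := exists_unit_mem_orthogonal_norm_sub_le M (hx.1 k) hk1
  refine ⟨z, hzM, hz, ?_⟩
  calc dist (jointQuadForm S z) μ
      ≤ dist (jointQuadForm S z) (jointQuadForm S (x k)) + dist (jointQuadForm S (x k)) μ :=
        dist_triangle _ _ _
    _ ≤ 2 * ‖S‖ * ‖z - x k‖ + dist (jointQuadForm S (x k)) μ := by
        gcongr
        exact dist_jointQuadForm_le (hx.1 k) hz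
    _ ≤ 2 * ‖S‖ * (2 * ‖M.starProjection (x k)‖) + dist (jointQuadForm S (x k)) μ := by gcongr
    _ < ε := hkε

theorem exists_pairwise_decoupled_dist_jointQuadForm_lt {ι : Type*} [Countable ι] [Nonempty ι]
    (hS : ∀ j, (S j : H →ₗ[ℂ] H).IsSymmetric)
    {p : ι → Fin s → ℝ} (hp : ∀ i, p i ∈ jointEssNumRangeReal S) (M : Submodule ℂ H)
    [FiniteDimensional ℂ M] {ε : ℝ} (hε : 0 < ε) :
    ∃ x : ι → H, (∀ i, x i ∈ Mᗮ ∧ ‖x i‖ = 1 ∧ dist (jointQuadForm S (x i)) (p i) < ε) ∧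
      Pairwise fun i l => Decoupled S (x i) (x l) := by
  obtain ⟨f, hf⟩ := exists_surjective_nat ι
  have hnext (k : ℕ) (F : Set H) (hF : F.Finite) : ∃ a ∈ Mᗮ, ‖a‖ = 1 ∧
      dist (jointQuadForm S a) (p (f k)) < ε ∧ ∀ b ∈ F, Decoupled S b a := by
    obtain ⟨N, hN, hMN, hdec⟩ := exists_le_forall_decoupled S M hF
    obtain ⟨a, haN, ha⟩ := exists_unit_mem_orthogonal_dist_jointQuadForm_lt (hp (f k)) N hε
    exact ⟨a, Submodule.orthogonal_le hMN haN, ha.1, ha.2, fun b hb => hdec b hb a haN⟩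
  obtain ⟨x, hx⟩ := exists_seq_forall_image_Iio hnext
  have hpair : Pairwise fun k l => Decoupled S (x k) (x l) := pairwise_decoupled_of_lt hS
    fun k l hkl => (hx l).2.2.2 (x k) (Set.mem_image_of_mem x hkl)
  refine ⟨x ∘ Function.surjInv hf, fun i => ?_,
    hpair.comp_of_injective (Function.injective_surjInv hf)⟩
  have hxi := hx (Function.surjInv hf i)
  rw [Function.surjInv_eq hf i] at hxi
  exact ⟨hxi.1, hxi.2.1, hxi.2.2.1⟩

theorem exists_unit_mem_orthogonal_jointQuadForm_eq
    (hS : ∀ j, (S j : H →ₗ[ℂ] H).IsSymmetric) (hμ : μ ∈ interior (jointEssNumRangeReal S))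
    (M : Submodule ℂ H) [FiniteDimensional ℂ M] :
    ∃ x ∈ Mᗮ, ‖x‖ = 1 ∧ jointQuadForm S x = μ := by
  classical
  obtain ⟨r, hr, hrW⟩ := nhds_basis_closedBall.mem_iff.1 (mem_interior_iff_mem_nhds.1 hμ)
  let corner (A : Set (Fin s)) (j : Fin s) : ℝ := μ j + if j ∈ A then r else -r
  have hcorner (A : Set (Fin s)) : corner A ∈ jointEssNumRangeReal S := by
    refine hrW ((dist_pi_le_iff hr.le).2 fun j => ?_)
    by_cases hj : j ∈ A <;> simp [corner, hj, abs_of_pos hr]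
  obtain ⟨x, hx, hdec⟩ := exists_pairwise_decoupled_dist_jointQuadForm_lt hS hcorner M hr
  have hclose (A : Set (Fin s)) (j : Fin s) : |jointQuadForm S (x A) j - corner A j| < r :=
    (dist_le_pi_dist _ _ j).trans_lt (hx A).2.2
  have hhull : μ ∈ convexHull ℝ (Set.range fun A => jointQuadForm S (x A)) := by
    refine mem_convexHull_range_of_orthants (fun A j hj => ?_) fun A j hj => ?_
    · have hlow := (abs_lt.1 (hclose A j)).1
      simp only [corner, if_pos hj] at hlow
      linarith
    · have hupp := (abs_lt.1 (hclose A j)).2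
      simp only [corner, if_neg hj] at hupp
      linarith
  obtain ⟨w, hw, hwμ⟩ := mem_convexHull_range_iff_exists_stdSimplex.1 hhull
  obtain ⟨u, hu, hu1, huw, -⟩ := exists_unit_mem_span_jointQuadForm_eq (fun A => (hx A).2.1) hdec hw
  exact ⟨u, Submodule.span_le.2 (Set.range_subset_iff.2 fun A => (hx A).1) hu, hu1, huw.trans hwμ⟩

theorem exists_unit_mem_orthogonal_jointQuadForm_eq_convexCombo
    (hS : ∀ j, (S j : H →ₗ[ℂ] H).IsSymmetric) {ν : Fin s → ℝ}
    (hν : ν ∈ interior (jointEssNumRangeReal S)) (M : Submodule ℂ H) [FiniteDimensional ℂ M]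
    {e : H} (heM : e ∈ Mᗮ) (he : ‖e‖ = 1) {c : ℝ} (hc0 : 0 ≤ c) (hc1 : c ≤ 1) :
    ∃ u ∈ Mᗮ, ‖u‖ = 1 ∧ jointQuadForm S u = c • jointQuadForm S e + (1 - c) • ν ∧
      inner ℂ e u = (√c : ℂ) := by
  obtain ⟨N, hN, hMN, hdec⟩ := exists_le_forall_decoupled S M (Set.finite_singleton e)
  obtain ⟨v, hvN, hv, rfl⟩ := exists_unit_mem_orthogonal_jointQuadForm_eq hS hν N
  have hpair : Pairwise fun i l => Decoupled S (![e, v] i) (![e, v] l) := by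
    refine pairwise_decoupled_of_lt hS fun i l hil => ?_
    obtain ⟨rfl, rfl⟩ : i = 0 ∧ l = 1 := by
      clear * - hil
      decide +revert
    exact hdec e rfl v hvN
  have hw : ![c, 1 - c] ∈ stdSimplex ℝ (Fin 2) := by
    simp [stdSimplex, Fin.forall_fin_two, hc0, hc1]
  obtain ⟨u, hu, hu1, huw, hinner⟩ := exists_unit_mem_span_jointQuadForm_eq
    (Fin.forall_fin_two.2 ⟨he, hv⟩) hpair hw
  refine ⟨u, Submodule.span_le.2 (Set.range_subset_iff.2 ?_) hu, hu1, ?_, hinner 0⟩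
  · exact Fin.forall_fin_two.2 ⟨heM, Submodule.orthogonal_le hMN hvN⟩
  · simpa [Fin.sum_univ_two] using huw

theorem exists_unit_mem_orthogonal_infDist_sq_le
    (hS : ∀ j, (S j : H →ₗ[ℂ] H).IsSymmetric) (hμ : μ ∈ interior (jointEssNumRangeReal S))
    (M : Submodule ℂ H) [FiniteDimensional ℂ M] (y : H) :
    ∃ u ∈ Mᗮ, ‖u‖ = 1 ∧ jointQuadForm S u = μ ∧
      infDist μ (jointEssNumRangeReal S)ᶜ * infDist y M ^ 2 ≤ 4 * ‖S‖ * ‖inner ℂ u y‖ ^ 2 := by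
  obtain ⟨c, hc0, hc1, hdc, hcombo⟩ :=
    exists_convexCombo_mem_interior (jointEssNumRangeReal_subset_closedBall S) hμ
  set b := y - M.starProjection y
  have hresid : infDist y M ≤ ‖b‖ :=
    (infDist_le_dist_of_mem (M.starProjection_apply_mem y)).trans_eq (dist_eq_norm _ _)
  obtain ⟨e, heM, he, hbe⟩ : ∃ e ∈ Mᗮ, ‖e‖ = 1 ∧ b = (‖b‖ : ℂ) • e := by
    rcases eq_or_ne b 0 with hb | hb
    · obtain ⟨e, heM, he, -⟩ := exists_unit_mem_orthogonal_jointQuadForm_eq hS hμ M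
      exact ⟨e, heM, he, by simp [hb]⟩
    · exact ⟨(‖b‖⁻¹ : ℂ) • b,
        Submodule.smul_mem _ _ (Submodule.sub_starProjection_mem_orthogonal y),
        norm_smul_inv_norm hb, (smul_inv_smul₀ (by simpa using hb) b).symm⟩
  obtain ⟨ν, hν, hνμ⟩ := hcombo _ (mem_closedBall_zero_iff.2 (norm_jointQuadForm_le he))
  obtain ⟨u, huM, hu, hform, hinner⟩ :=
    exists_unit_mem_orthogonal_jointQuadForm_eq_convexCombo hS hν M heM he hc0 hc1.le
  refine ⟨u, huM, hu, hform.trans hνμ, ?_⟩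
  have huy : inner ℂ u y = inner ℂ u b := by
    rw [inner_sub_right, Submodule.inner_left_of_mem_orthogonal (M.starProjection_apply_mem y) huM,
      sub_zero]
  have hcapture : ‖inner ℂ u y‖ ^ 2 = c * ‖b‖ ^ 2 := by
    rw [huy, hbe, inner_smul_right, ← inner_conj_symm, hinner, Complex.conj_ofReal, ← hbe,
      ← Complex.ofReal_mul, Complex.norm_real, Real.norm_of_nonneg (by positivity), mul_pow,
      Real.sq_sqrt hc0, mul_comm]
  calc infDist μ (jointEssNumRangeReal S)ᶜ * infDist y M ^ 2
      ≤ 4 * ‖S‖ * c * ‖b‖ ^ 2 := by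
        gcongr
        exact infDist_nonneg
    _ = 4 * ‖S‖ * ‖inner ℂ u y‖ ^ 2 := by rw [hcapture, mul_assoc]

theorem exists_unit_mem_orthogonal_forall_infDist_sq_le {ι : Type*} [Nonempty ι]
    (hS : ∀ j, (S j : H →ₗ[ℂ] H).IsSymmetric)
    (hμ : μ ∈ interior (jointEssNumRangeReal S)) (M : Submodule ℂ H) [FiniteDimensional ℂ M]
    {y : ι → H} (hy : BddAbove (Set.range fun i => ‖y i‖ ^ 2)) :
    ∃ u ∈ Mᗮ, ‖u‖ = 1 ∧ jointQuadForm S u = μ ∧ ∃ m, ∀ i,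
      infDist μ (jointEssNumRangeReal S)ᶜ * infDist (y i) M ^ 2
        ≤ 8 * ‖S‖ * ‖inner ℂ u (y m)‖ ^ 2 := by
  have hbdd : BddAbove (Set.range fun i => infDist (y i) M ^ 2) := by
    refine hy.range_mono _ fun i => pow_le_pow_left₀ infDist_nonneg ?_ 2
    simpa only [dist_zero_right] using infDist_le_dist_of_mem (x := y i) M.zero_mem
  obtain ⟨m, hm⟩ := exists_forall_le_two_mul (fun i => sq_nonneg (infDist (y i) M)) hbdd
  obtain ⟨u, huM, hu, hform, hcapture⟩ := exists_unit_mem_orthogonal_infDist_sq_le hS hμ M (y m)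
  refine ⟨u, huM, hu, hform, m, fun i => ?_⟩
  calc infDist μ (jointEssNumRangeReal S)ᶜ * infDist (y i) M ^ 2
      ≤ infDist μ (jointEssNumRangeReal S)ᶜ * (2 * infDist (y m) M ^ 2) :=
        mul_le_mul_of_nonneg_left (hm i) infDist_nonneg
    _ ≤ 8 * ‖S‖ * ‖inner ℂ u (y m)‖ ^ 2 := by linarith

theorem stmt_0_general [TopologicalSpace.SeparableSpace H]
    (hS : ∀ j, (S j : H →ₗ[ℂ] H).IsSymmetric) {lam : ℕ → Fin s → ℝ}
    (hmem : ∀ k, lam k ∈ interior (jointEssNumRangeReal S))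
    (hblaschke : Tendsto
      (fun N => ∑ k ∈ Finset.range N, infDist (lam k) (jointEssNumRangeReal S)ᶜ) atTop atTop) :
    ∃ u : ℕ → H, Orthonormal ℂ u ∧ (Submodule.span ℂ (Set.range u)).topologicalClosure = ⊤ ∧
      ∀ k j, ⟪S j (u k), u k⟫ = (lam k j : ℂ) := by
  obtain ⟨y, hy, hydense⟩ := exists_summable_norm_sq_dense_span (𝕜 := ℂ) (E := H)
  have hnext (k : ℕ) (F : Set H) (hF : F.Finite) :=
    have := FiniteDimensional.span_of_finite ℂ hF
    exists_unit_mem_orthogonal_forall_infDist_sq_le hS (hmem k) (Submodule.span ℂ F)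
      hy.tendsto_atTop_zero.bddAbove_range
  obtain ⟨u, hu⟩ := exists_seq_forall_image_Iio hnext
  choose horth hnorm hform m hcapture using hu
  have hortho : Orthonormal ℂ u := orthonormal_of_mem_orthogonal_span_image_Iio hnorm horth
  refine ⟨u, hortho, ?_, fun k j => ?_⟩
  · have hyu (l : ℕ) : y l ∈ (Submodule.span ℂ (Set.range u)).topologicalClosure := by
      refine mem_topologicalClosure_span_of_infDist_sq_le hortho hy hblaschke (by positivity) m
        fun k => le_trans ?_ (hcapture k l)
      have hmono : Submodule.span ℂ (u '' Set.Iio k) ≤ Submodule.span ℂ (Set.range u) :=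
        Submodule.span_mono (Set.image_subset_range u _)
      gcongr
      · exact infDist_nonneg
      · exact infDist_nonneg
      · exact infDist_le_infDist_of_subset hmono (Submodule.nonempty _)
    rw [eq_top_iff, ← Submodule.dense_iff_topologicalClosure_eq_top.1 hydense]
    exact Submodule.topologicalClosure_minimal _ (Submodule.span_le.2 (Set.range_subset_iff.2 hyu))
      (Submodule.isClosed_topologicalClosure _)
  · rw [← (hS j).coe_reApplyInnerSelf_apply]
    exact congrArg Complex.ofReal (congrFun (hform k) j)

end JointEssNumRange

theorem stmt_0 {H : Type*} [NormedAddCommGroup H] [InnerProductSpace ℂ H]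
    [CompleteSpace H] [TopologicalSpace.SeparableSpace H]
    (hdim : ¬ FiniteDimensional ℂ H)
    {s : ℕ} (S : Fin s → H →L[ℂ] H) (hsa : ∀ j, IsSelfAdjoint (S j))
    (lam : ℕ → Fin s → ℝ)
    (hmem : ∀ k, lam k ∈ interior (jointEssNumRangeReal S))
    (hblaschke : Tendsto
      (fun N => ∑ k ∈ Finset.range N, Metric.infDist (lam k) ((jointEssNumRangeReal S)ᶜ))
      atTop atTop) :
    ∃ u : HilbertBasis ℕ ℂ H, ∀ k j, ⟪(S j) (u k), u k⟫ = (lam k j : ℂ) := by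
  obtain ⟨u, hu, hspan, hval⟩ := stmt_0_general (fun j => (hsa j).isSymmetric) hmem hblaschke
  exact ⟨HilbertBasis.mk hu hspan.ge, by simpa only [HilbertBasis.coe_mk] using hval⟩
end

section
/- Let H be a complex separable infinite-dimensional Hilbert space and 𝒯 = (T_1, …, T_n) an n-tuple of bounded operators on H. Identify ℂ^n with ℝ^{2n} (each coordinate by its real and imaginary parts), and let M ⊂ ℝ^{2n} be the smallest affine subspace containing the joint numerical range W(𝒯). Let (λ_k)_{k≥1} be a sequence contained in the interior of W_e(𝒯) relative to M, and suppose ∑_{k=1}^∞ dist(λ_k, M ∖ W_e(𝒯)) = ∞. Then there exists an orthonormal basis (u_k)_{k≥1} of H such that ⟨T_j u_k, u_k⟩ = λ_{k,j} for every k ≥ 1 and every j = 1, …, n. -/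
open Filter Metric
open scoped ComplexInnerProductSpace

/-- The joint numerical range of a tuple of bounded operators:
`W(𝒯) = {(⟨T_1 x, x⟩, …, ⟨T_n x, x⟩) : ‖x‖ = 1} ⊂ ℂ^n`. -/
def jointNumRange {H : Type*} [NormedAddCommGroup H] [InnerProductSpace ℂ H]
    {n : ℕ} (T : Fin n → H →L[ℂ] H) : Set (Fin n → ℂ) :=
  {lam | ∃ x : H, ‖x‖ = 1 ∧ ∀ j, ⟪(T j) x, x⟫ = lam j}

/-- The joint essential numerical range of a tuple of bounded operators: the set of
`λ ∈ ℂ^n` for which there is an orthonormal sequence `(x_k)` with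
`⟨T_j x_k, x_k⟩ → λ_j` for every `j`. -/
def jointEssNumRange {H : Type*} [NormedAddCommGroup H] [InnerProductSpace ℂ H]
    {n : ℕ} (T : Fin n → H →L[ℂ] H) : Set (Fin n → ℂ) :=
  {lam | ∃ x : ℕ → H, Orthonormal ℂ x ∧
    ∀ j, Tendsto (fun k => ⟪(T j) (x k), x k⟫) atTop (nhds (lam j))}

/-! Unit vectors that are orthogonal to each other and to each other's images under the `T_j` and
`T_j*` combine, with coefficients `√a_i`, so that the values of the form `⟨T_j x, x⟩` average with
weights `a_i`. Averaging vectors whose values approximate a finite net around an interior point of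
`W_e(𝒯)`, one attains this point exactly, in the complement of any finite-dimensional subspace.

Let `c` be the direction of the component in `Fᗮ` of a given vector `e`. Writing `λ_k` as
`(1 - t) ν + t ⟨𝒯 c, c⟩` with `ν` still interior, one obtains a unit vector of `Fᗮ` with value `λ_k`
that captures the fraction `t` of the squared distance from `e` to `F`, where `t` may be a fixed
multiple of `dist(λ_k, M ∖ W_e(𝒯))`. The divergent series of these fractions splits into infinitely
many divergent series, one for each vector `e` of a dense sequence. If `v` is orthogonal to every
chosen `u_k`, every residual of `e` pairs with `v` to `⟨v, e⟩`, so its norm stays bounded below and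
Bessel's inequality for `e` would bound a divergent series, unless `⟨v, e⟩ = 0`. -/

section Series

lemma exists_not_summable_indicator_preimage_singleton {t : ℕ → ℝ} (ht : 0 ≤ t)
    (hsum : ¬ Summable t) :
    ∃ m : ℕ → ℕ, ∀ j, ¬ Summable ((m ⁻¹' {j}).indicator t) := by
  have hblock : ∀ a, ∃ b, a < b ∧ 1 ≤ ∑ k ∈ Finset.Ico a b, t k := fun a => by
    rw [not_summable_iff_tendsto_nat_atTop_of_nonneg ht] at hsum
    obtain ⟨b, hb, hab⟩ := ((hsum.eventually_ge_atTop (∑ k ∈ Finset.range a, t k + 1)).and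
      (eventually_gt_atTop a)).exists
    exact ⟨b, hab, by rw [Finset.sum_Ico_eq_sub _ hab.le]; linarith⟩
  choose next lt_next one_le_sum using hblock
  let a : ℕ → ℕ := fun i => next^[i] 0
  have a_succ : ∀ i, a (i + 1) = next (a i) := fun i => Function.iterate_succ_apply' next i 0
  have a_mono : StrictMono a := strictMono_nat_of_lt_succ fun i => a_succ i ▸ lt_next (a i)
  let block : ℕ → ℕ := fun k => Nat.findGreatest (fun i => a i ≤ k) k
  have block_eq : ∀ i, ∀ k ∈ Finset.Ico (a i) (a (i + 1)), block k = i := fun i k hk => by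
    rw [Finset.mem_Ico] at hk
    exact Nat.findGreatest_eq_iff.2 ⟨a_mono.id_le i |>.trans hk.1, fun _ => hk.1,
      fun l hil _ => not_le.2 (hk.2.trans_le (a_mono.monotone hil))⟩
  -- Each block has mass at least `1`, and infinitely many blocks are assigned to each `j`.
  refine ⟨fun k => (Nat.unpair (block k)).1, fun j hj => ?_⟩
  obtain ⟨K, hK⟩ := Metric.cauchySeq_iff.1 hj.hasSum.tendsto_sum_nat.cauchySeq 1 one_pos
  set i := Nat.pair j K
  have hKa : K ≤ a i := (Nat.right_le_pair j K).trans (a_mono.id_le i)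
  have ha : a i ≤ a (i + 1) := a_mono.monotone i.le_succ
  have hsum_block : ∑ k ∈ Finset.Ico (a i) (a (i + 1)),
      ((fun k => (Nat.unpair (block k)).1) ⁻¹' {j}).indicator t k
        = ∑ k ∈ Finset.Ico (a i) (a (i + 1)), t k :=
    Finset.sum_congr rfl fun k hk => Set.indicator_of_mem (by simp [block_eq i k hk, i]) t
  have hlt := hK _ (hKa.trans ha) _ hKa
  rw [Real.dist_eq, ← Finset.sum_Ico_eq_sub _ ha, hsum_block, a_succ] at hlt
  linarith [le_abs_self (∑ k ∈ Finset.Ico (a i) (next (a i)), t k), one_le_sum (a i)]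

end Series

section Convex

variable {E : Type*} [NormedAddCommGroup E] [NormedSpace ℝ E]

lemma mem_convexHull_of_forall_exists_dist_le {M : AffineSubspace ℝ E} {s : Set E}
    (hs : s.Finite) (hsM : s ⊆ M) {c : E} (hc : c ∈ M) {r η : ℝ} (hr : 0 < r) (hη : η < r)
    (hnet : ∀ v ∈ M, dist v c ≤ r → ∃ w ∈ s, dist v w ≤ η) : c ∈ convexHull ℝ s := by
  by_contra hcs
  obtain ⟨f, u, hfc, hfs⟩ := geometric_hahn_banach_point_closed (convex_convexHull ℝ s)
    (hs.isCompact_convexHull ℝ).isClosed hcs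
  have f_lt : ∀ w ∈ s, f c < f w := fun w hw => hfc.trans (hfs w (subset_convexHull ℝ s hw))
  -- Every point of the `r`-ball is `η`-close to a net point, where `f` exceeds `f c`; this gives
  -- `r ‖g‖ ≤ η ‖g‖`, so `f` is constant on `M`.
  let g : M.direction →L[ℝ] ℝ := f.comp M.direction.subtypeL
  have neg_le : ∀ z : M.direction, ‖z‖ ≤ r → -g z ≤ ‖g‖ * η := fun z hz => by
    have hzM : (z : E) + c ∈ M := AffineSubspace.vadd_mem_of_mem_direction z.2 hc
    obtain ⟨w, hws, hw⟩ := hnet (z + c) hzM (by simpa using hz)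
    have hgw := g.le_opNorm_of_le (x := ⟨w - (z + c), M.vsub_mem_direction (hsM hws) hzM⟩)
      (c := η) (by rwa [dist_comm, dist_eq_norm] at hw)
    calc -g z = f (w - (z + c)) - (f w - f c) := by simp [g]
      _ ≤ ‖g‖ * η - 0 := sub_le_sub ((le_abs_self _).trans hgw) (sub_nonneg.2 (f_lt w hws).le)
      _ = ‖g‖ * η := sub_zero _
  have hg : ‖g‖ ≤ ‖g‖ * η / r := g.opNorm_bound_of_ball_bound hr _ fun z hz => by
    rw [mem_closedBall_zero_iff] at hz
    exact abs_le'.2 ⟨by simpa using neg_le (-z) (by rwa [norm_neg]), neg_le z hz⟩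
  have hg0 : ‖g‖ ≤ 0 := not_lt.1 fun hpos =>
    (mul_lt_mul_of_pos_left hη hpos).not_ge ((le_div_iff₀ hr).1 hg)
  obtain ⟨w, hws, -⟩ := hnet c hc (by simpa using hr.le)
  have f_sub_le : ‖f (w - c)‖ ≤ 0 * ‖w - c‖ :=
    g.le_of_opNorm_le hg0 ⟨w - c, M.vsub_mem_direction (hsM hws) hc⟩
  rw [map_sub, zero_mul] at f_sub_le
  linarith [f_lt w hws, Real.le_norm_self (f w - f c)]

end Convex

section Orthonormal

variable {𝕜 E : Type*} [RCLike 𝕜] [NormedAddCommGroup E] [InnerProductSpace 𝕜 E]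

lemma tendsto_inner_cofinite_of_orthonormal {ι : Type*} {x : ι → E} (hx : Orthonormal 𝕜 x)
    (e : E) : Tendsto (fun k => inner 𝕜 e (x k)) cofinite (nhds 0) := by
  have h := (hx.inner_products_summable e).tendsto_cofinite_zero.sqrt
  simp only [Real.sqrt_sq (norm_nonneg _), Real.sqrt_zero, norm_inner_symm _ e] at h
  exact tendsto_zero_iff_norm_tendsto_zero.2 h

lemma tendsto_starProjection_cofinite_of_orthonormal {ι : Type*} {x : ι → E}
    (hx : Orthonormal 𝕜 x) (F : Submodule 𝕜 E) [FiniteDimensional 𝕜 F] :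
    Tendsto (fun k => F.starProjection (x k)) cofinite (nhds 0) := by
  let b := stdOrthonormalBasis 𝕜 F
  have hsum : Tendsto (fun k => ∑ i, inner 𝕜 (b i : E) (x k) • (b i : E)) cofinite
      (nhds (∑ i, (0 : 𝕜) • (b i : E))) := tendsto_finsetSum _ fun i _ =>
    (tendsto_inner_cofinite_of_orthonormal hx (b i : E)).smul_const (b i : E)
  simpa only [b.starProjection_eq_sum_rankOne, sum_apply, InnerProductSpace.rankOne_apply,
    zero_smul, Finset.sum_const_zero] using hsum

/-- The sequence whose `k`-th term is chosen by `g` from `k` and the span of the earlier terms. -/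
noncomputable def greedySeq (g : ℕ → Submodule 𝕜 E → E) (k : ℕ) : E :=
  g k (Submodule.span 𝕜 (Set.range fun i : Set.Iio k => greedySeq g i))
decreasing_by exact i.2

instance finiteDimensional_span_image {ι : Type*} (u : ι → E) (s : Set ι) [Finite s] :
    FiniteDimensional 𝕜 (Submodule.span 𝕜 (u '' s)) :=
  FiniteDimensional.span_of_finite 𝕜 (s.toFinite.image u)

lemma exists_orthonormal_seq {P : ℕ → Submodule 𝕜 E → E → Prop}
    (h : ∀ (k : ℕ) (F : Submodule 𝕜 E) [FiniteDimensional 𝕜 F], ∃ u ∈ Fᗮ, ‖u‖ = 1 ∧ P k F u) :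
    ∃ u : ℕ → E, Orthonormal 𝕜 u ∧ ∀ k, P k (Submodule.span 𝕜 (u '' Set.Iio k)) (u k) := by
  choose! g hg using h
  let u := greedySeq g
  have hu : ∀ k, u k = g k (Submodule.span 𝕜 (u '' Set.Iio k)) := fun k => by
    rw [Set.image_eq_range]; exact greedySeq.eq_1 g k
  have hgu : ∀ k, u k ∈ (Submodule.span 𝕜 (u '' Set.Iio k))ᗮ ∧ ‖u k‖ = 1 ∧
      P k (Submodule.span 𝕜 (u '' Set.Iio k)) (u k) := fun k => by
    rw [hu k]
    exact hg k _
  have inner_eq_zero : ∀ i k, i < k → inner 𝕜 (u i) (u k) = 0 := fun i k hik =>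
    Submodule.inner_right_of_mem_orthogonal
      (Submodule.subset_span (Set.mem_image_of_mem u hik)) (hgu k).1
  refine ⟨u, ⟨fun k => (hgu k).2.1, fun i k hik => ?_⟩, fun k => (hgu k).2.2⟩
  rcases lt_or_gt_of_ne hik with hlt | hgt
  · exact inner_eq_zero i k hlt
  · exact inner_eq_zero_symm.1 (inner_eq_zero k i hgt)

lemma inner_eq_zero_of_not_summable_indicator {ι : Type*} {u : ι → E} (hu : Orthonormal 𝕜 u)
    {F : ι → Submodule 𝕜 E} [∀ k, (F k)ᗮ.HasOrthogonalProjection] {t : ι → ℝ} (ht : 0 ≤ t)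
    {A : Set ι} (hA : ¬ Summable (A.indicator t)) {e : E}
    (hle : ∀ k ∈ A, t k * ‖(F k)ᗮ.starProjection e‖ ^ 2 ≤ ‖inner 𝕜 (u k) e‖ ^ 2)
    {v : E} (hv : ∀ k, v ∈ (F k)ᗮ) : inner 𝕜 v e = 0 := by
  by_contra hve
  have norm_inner_le : ∀ k, ‖inner 𝕜 v e‖ ^ 2 ≤ ‖v‖ ^ 2 * ‖(F k)ᗮ.starProjection e‖ ^ 2 :=
    fun k => by
      rw [← Submodule.starProjection_eq_self_iff.2 (hv k),
        Submodule.inner_starProjection_left_eq_right, ← mul_pow,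
        Submodule.starProjection_eq_self_iff.2 (hv k)]
      gcongr
      exact norm_inner_le_norm v _
  have indicator_le : ∀ k, A.indicator t k * ‖inner 𝕜 v e‖ ^ 2
      ≤ ‖v‖ ^ 2 * ‖inner 𝕜 (u k) e‖ ^ 2 := fun k => by
    by_cases hk : k ∈ A
    · rw [Set.indicator_of_mem hk]
      calc t k * ‖inner 𝕜 v e‖ ^ 2
          ≤ t k * (‖v‖ ^ 2 * ‖(F k)ᗮ.starProjection e‖ ^ 2) :=
            mul_le_mul_of_nonneg_left (norm_inner_le k) (ht k)
        _ = ‖v‖ ^ 2 * (t k * ‖(F k)ᗮ.starProjection e‖ ^ 2) := by ring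
        _ ≤ ‖v‖ ^ 2 * ‖inner 𝕜 (u k) e‖ ^ 2 := by gcongr; exact hle k hk
    · rw [Set.indicator_of_notMem hk, zero_mul]
      positivity
  have bessel : Summable fun k => ‖v‖ ^ 2 * ‖inner 𝕜 (u k) e‖ ^ 2 :=
    (hu.inner_products_summable e).mul_left _
  have hsum : Summable fun k => A.indicator t k * ‖inner 𝕜 v e‖ ^ 2 :=
    bessel.of_nonneg_of_le
      (fun k => mul_nonneg (Set.indicator_nonneg (fun k _ => ht k) k) (sq_nonneg _)) indicator_le
  exact hA ((summable_mul_right_iff (pow_ne_zero 2 (norm_ne_zero_iff.2 hve))).1 hsum)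

lemma orthogonal_span_range_eq_bot_of_not_summable_indicator {u : ℕ → E} (hu : Orthonormal 𝕜 u)
    {e : ℕ → E} (he : DenseRange e) {m : ℕ → ℕ} {t : ℕ → ℝ} (ht : 0 ≤ t)
    (hm : ∀ j, ¬ Summable ((m ⁻¹' {j}).indicator t))
    (hle : ∀ k, t k * ‖(Submodule.span 𝕜 (u '' Set.Iio k))ᗮ.starProjection (e (m k))‖ ^ 2
      ≤ ‖inner 𝕜 (u k) (e (m k))‖ ^ 2) : (Submodule.span 𝕜 (Set.range u))ᗮ = ⊥ := by
  refine (Submodule.eq_bot_iff _).2 fun v hv => he.eq_zero_of_inner_left 𝕜 fun j => ?_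
  refine inner_eq_zero_of_not_summable_indicator hu
    (F := fun k => Submodule.span 𝕜 (u '' Set.Iio k)) ht (hm j) (fun k hk => ?_) fun k =>
      Submodule.orthogonal_le (Submodule.span_mono (Set.image_subset_range u _)) hv
  rw [← (hk : m k = j)]
  exact hle k

end Orthonormal

open NormedSpace in
lemma norm_normalize_sub_le {E : Type*} [NormedAddCommGroup E] [NormedSpace ℝ E] {x : E}
    (hx : ‖x‖ = 1) (y : E) : ‖normalize y - x‖ ≤ 2 * ‖y - x‖ := by
  rcases eq_or_ne y 0 with rfl | hy
  · simp [hx]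
  have hnormalize : normalize y - y = (1 - ‖y‖) • normalize y := by
    rw [sub_smul, one_smul, norm_smul_normalize]
  calc ‖normalize y - x‖ ≤ ‖normalize y - y‖ + ‖y - x‖ := norm_sub_le_norm_sub_add_norm_sub _ _ _
    _ = |‖x‖ - ‖y‖| + ‖y - x‖ := by
        rw [hnormalize, norm_smul, norm_normalize_eq_one_iff.2 hy, mul_one, hx, Real.norm_eq_abs]
    _ ≤ ‖y - x‖ + ‖y - x‖ := by
        gcongr
        rw [norm_sub_rev y x]
        exact abs_norm_sub_norm_le x y
    _ = 2 * ‖y - x‖ := (two_mul _).symm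

section JointForm

variable {H : Type*} [NormedAddCommGroup H] [InnerProductSpace ℂ H] {ι : Type*}

/-- The tuple of quadratic forms `x ↦ ⟨T_j x, x⟩`, whose values on unit vectors make up `W(𝒯)`. -/
noncomputable def jointForm (T : ι → H →L[ℂ] H) (x : H) : ι → ℂ := fun j => ⟪T j x, x⟫

lemma norm_jointForm_sub_le [Fintype ι] (T : ι → H →L[ℂ] H) (x y : H) :
    ‖jointForm T x - jointForm T y‖ ≤ ‖T‖ * (‖x‖ + ‖y‖) * ‖x - y‖ := by
  refine (pi_norm_le_iff_of_nonneg (by positivity)).2 fun j => ?_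
  have hT : ∀ z, ‖T j z‖ ≤ ‖T‖ * ‖z‖ := fun z => (T j).le_of_opNorm_le (norm_le_pi_norm T j) z
  calc ‖⟪T j x, x⟫ - ⟪T j y, y⟫‖ = ‖⟪T j x, x - y⟫ + ⟪T j (x - y), y⟫‖ := by
        rw [map_sub, inner_sub_left, inner_sub_right, sub_add_sub_cancel]
    _ ≤ ‖T j x‖ * ‖x - y‖ + ‖T j (x - y)‖ * ‖y‖ :=
        norm_add_le_of_le (norm_inner_le_norm _ _) (norm_inner_le_norm _ _)
    _ ≤ ‖T‖ * ‖x‖ * ‖x - y‖ + ‖T‖ * ‖x - y‖ * ‖y‖ := by gcongr <;> exact hT _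
    _ = ‖T‖ * (‖x‖ + ‖y‖) * ‖x - y‖ := by ring

lemma norm_jointForm_le [Fintype ι] (T : ι → H →L[ℂ] H) (x : H) :
    ‖jointForm T x‖ ≤ ‖T‖ * ‖x‖ ^ 2 := by
  have h0 : jointForm T 0 = 0 := funext fun j => inner_zero_right _
  simpa [h0, sq, mul_assoc] using norm_jointForm_sub_le T x 0

lemma norm_le_of_mem_jointEssNumRange {n : ℕ} {T : Fin n → H →L[ℂ] H} {ν : Fin n → ℂ}
    (hν : ν ∈ jointEssNumRange T) : ‖ν‖ ≤ ‖T‖ := by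
  obtain ⟨x, hx, hlim⟩ := hν
  have hlim' : Tendsto (fun k => jointForm T (x k)) atTop (nhds ν) := tendsto_pi_nhds.2 hlim
  exact le_of_tendsto hlim'.norm (.of_forall fun k => by
    simpa [hx.norm_eq_one k] using norm_jointForm_le T (x k))

lemma exists_unit_mem_orthogonal_dist_jointForm_lt {n : ℕ} {T : Fin n → H →L[ℂ] H}
    {ν : Fin n → ℂ} (hν : ν ∈ jointEssNumRange T) (G : Submodule ℂ H) [FiniteDimensional ℂ G]
    {η : ℝ} (hη : 0 < η) :
    ∃ x ∈ Gᗮ, ‖x‖ = 1 ∧ dist (jointForm T x) ν < η := by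
  obtain ⟨x, hx, hlim⟩ := hν
  let z : ℕ → H := fun k => NormedSpace.normalize (Gᗮ.starProjection (x k))
  have hzG : ∀ k, z k ∈ Gᗮ := fun k =>
    Submodule.smul_of_tower_mem _ _ (Gᗮ.starProjection_apply_mem _)
  have z_eq_zero : ∀ k, Gᗮ.starProjection (x k) = 0 → z k = 0 := fun k h => by
    simp only [z, h, NormedSpace.normalize_zero_eq_zero]
  have hzx : Tendsto (fun k => ‖z k - x k‖) atTop (nhds 0) := by
    have hproj := tendsto_starProjection_cofinite_of_orthonormal hx G
    rw [Nat.cofinite_eq_atTop] at hproj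
    refine squeeze_zero (fun _ => norm_nonneg _)
      (fun k => norm_normalize_sub_le (hx.norm_eq_one k) (Gᗮ.starProjection (x k))) ?_
    simpa [Submodule.starProjection_orthogonal] using hproj.norm.const_mul 2
  have z_norm_le : ∀ k, ‖z k‖ ≤ 1 := fun k => by
    rcases eq_or_ne (Gᗮ.starProjection (x k)) 0 with h | h
    · exact (norm_eq_zero.2 (z_eq_zero k h)).trans_le zero_le_one
    · exact (NormedSpace.norm_normalize_eq_one_iff.2 h).le
  have hform : Tendsto (fun k => jointForm T (z k)) atTop (nhds ν) := by
    refine (show Tendsto (fun k => jointForm T (x k)) atTop (nhds ν) from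
      tendsto_pi_nhds.2 hlim).congr_dist ?_
    refine squeeze_zero (g := fun k => ‖T‖ * 2 * ‖z k - x k‖) (fun _ => dist_nonneg) (fun k => ?_)
      (by simpa using hzx.const_mul (‖T‖ * 2))
    rw [dist_comm, dist_eq_norm]
    refine (norm_jointForm_sub_le T (z k) (x k)).trans ?_
    gcongr
    linarith [z_norm_le k, hx.norm_eq_one k]
  obtain ⟨k, hk, hk1⟩ := ((Metric.tendsto_nhds.1 hform η hη).and
    (hzx.eventually_lt_const one_pos)).exists
  refine ⟨z k, hzG k, NormedSpace.norm_normalize_eq_one_iff.2 fun h => hk1.ne ?_, hk⟩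
  rw [z_eq_zero k h, zero_sub, norm_neg, hx.norm_eq_one k]

/-- Two vectors are form-orthogonal for `𝒯` if they are orthogonal and all cross terms
`⟨T_j x, y⟩`, `⟨T_j y, x⟩` vanish, so that `jointForm T` is additive on multiples of them. -/
structure FormOrthogonal (T : ι → H →L[ℂ] H) (x y : H) : Prop where
  inner_eq_zero : ⟪x, y⟫ = 0
  inner_left_eq_zero : ∀ j, ⟪T j x, y⟫ = 0
  inner_right_eq_zero : ∀ j, ⟪T j y, x⟫ = 0

lemma FormOrthogonal.symm {T : ι → H →L[ℂ] H} {x y : H} (h : FormOrthogonal T x y) :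
    FormOrthogonal T y x :=
  ⟨inner_eq_zero_symm.1 h.inner_eq_zero, h.inner_right_eq_zero, h.inner_left_eq_zero⟩

lemma inner_map_sum_sqrt_smul_s1 {κ : Type*} {s : Finset κ} {S : H →L[ℂ] H} {x : κ → H}
    (hS : (s : Set κ).Pairwise fun i l => ⟪S (x i), x l⟫ = 0) {a : κ → ℝ}
    (ha : ∀ i ∈ s, 0 ≤ a i) :
    ⟪S (∑ i ∈ s, √(a i) • x i), ∑ i ∈ s, √(a i) • x i⟫ = ∑ i ∈ s, a i • ⟪S (x i), x i⟫ := by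
  have hterm : ∀ i l, ⟪S (√(a i) • x i), √(a l) • x l⟫
      = (√(a i) * √(a l)) • ⟪S (x i), x l⟫ := fun i l => by
    rw [S.map_smul_of_tower, inner_smul_left_eq_smul, inner_smul_right_eq_smul, smul_smul]
  rw [map_sum, sum_inner]
  refine Finset.sum_congr rfl fun i hi => ?_
  rw [inner_sum, Finset.sum_eq_single_of_mem i hi, hterm, Real.mul_self_sqrt (ha i hi)]
  intro l hl hli
  rw [hterm, hS hi hl hli.symm, smul_zero]

section ConvexCombination

variable {κ : Type*} {T : ι → H →L[ℂ] H} {s : Finset κ} {x : κ → H} {a : κ → ℝ}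

lemma jointForm_sum_sqrt_smul (hx : (s : Set κ).Pairwise (Function.onFun (FormOrthogonal T) x))
    (ha : ∀ i ∈ s, 0 ≤ a i) :
    jointForm T (∑ i ∈ s, √(a i) • x i) = ∑ i ∈ s, a i • jointForm T (x i) := by
  ext j
  rw [Finset.sum_apply]
  exact inner_map_sum_sqrt_smul_s1 (hx.mono' fun _ _ h => h.inner_left_eq_zero j) ha

lemma norm_sum_sqrt_smul_eq_one (hx : (s : Set κ).Pairwise (Function.onFun (FormOrthogonal T) x))
    (hx1 : ∀ i ∈ s, ‖x i‖ = 1) (ha : ∀ i ∈ s, 0 ≤ a i) (ha1 : ∑ i ∈ s, a i = 1) :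
    ‖∑ i ∈ s, √(a i) • x i‖ = 1 := by
  have hsq := inner_map_sum_sqrt_smul_s1 (S := .id ℂ H) (hx.mono' fun _ _ h => h.inner_eq_zero) ha
  have hone : ∑ i ∈ s, a i • ⟪x i, x i⟫ = 1 := by
    rw [Finset.sum_congr rfl fun i hi => by
      rw [inner_self_eq_one_of_norm_eq_one (hx1 i hi)], ← Finset.sum_smul, ha1, one_smul]
  have norm_sq : ((‖∑ i ∈ s, √(a i) • x i‖ : ℝ) : ℂ) ^ 2 = 1 :=
    (inner_self_eq_norm_sq_to_K _).symm.trans (hsq.trans hone)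
  exact (pow_eq_one_iff_of_nonneg (norm_nonneg _) two_ne_zero).1 (by exact_mod_cast norm_sq)

lemma exists_unit_mem_span_jointForm_eq (hx : Pairwise (Function.onFun (FormOrthogonal T) x))
    (hx1 : ∀ i, ‖x i‖ = 1) {ν : ι → ℂ}
    (hν : ν ∈ convexHull ℝ (Set.range fun i => jointForm T (x i))) :
    ∃ y ∈ Submodule.span ℂ (Set.range x), ‖y‖ = 1 ∧ jointForm T y = ν := by
  rw [convexHull_range_eq_exists_affineCombination] at hν
  obtain ⟨s, a, ha, ha1, rfl⟩ := hν
  have hxs : (s : Set κ).Pairwise (Function.onFun (FormOrthogonal T) x) := hx.set_pairwise s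
  refine ⟨∑ i ∈ s, √(a i) • x i, ?_, norm_sum_sqrt_smul_eq_one hxs (fun i _ => hx1 i) ha ha1, ?_⟩
  · exact Submodule.sum_mem _ fun i _ => Submodule.smul_of_tower_mem _ _
      (Submodule.subset_span (Set.mem_range_self i))
  · rw [jointForm_sum_sqrt_smul hxs ha, Finset.affineCombination_eq_linear_combination _ _ _ ha1]

end ConvexCombination

section Complete

variable [CompleteSpace H]

/-- The span of `x`, `T_j x` and `T_j* x` for all `j`; its orthogonal complement consists of
vectors form-orthogonal to `x`. -/
noncomputable def interactionSpan (T : ι → H →L[ℂ] H) (x : H) : Submodule ℂ H :=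
  Submodule.span ℂ (insert x (Set.range (fun j => T j x) ∪ Set.range fun j => (T j).adjoint x))

instance finiteDimensional_interactionSpan [Finite ι] (T : ι → H →L[ℂ] H) (x : H) :
    FiniteDimensional ℂ (interactionSpan T x) :=
  FiniteDimensional.span_of_finite ℂ (((Set.finite_range _).union (Set.finite_range _)).insert x)

lemma formOrthogonal_of_mem_orthogonal_interactionSpan {T : ι → H →L[ℂ] H} {x y : H}
    (hy : y ∈ (interactionSpan T x)ᗮ) : FormOrthogonal T x y where
  inner_eq_zero := hy x (Submodule.subset_span (.inl rfl))
  inner_left_eq_zero j := hy _ (Submodule.subset_span (.inr (.inl ⟨j, rfl⟩)))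
  inner_right_eq_zero j := by
    rw [← ContinuousLinearMap.adjoint_inner_right, inner_eq_zero_symm]
    exact hy _ (Submodule.subset_span (.inr (.inr ⟨j, rfl⟩)))

lemma exists_jointForm_eq_lineMap_inner_eq_sqrt {T : ι → H →L[ℂ] H} {c x : H}
    {F : Submodule ℂ H} (hcF : c ∈ Fᗮ) (hc : ‖c‖ = 1)
    (hxF : x ∈ (F ⊔ interactionSpan T c)ᗮ) (hx : ‖x‖ = 1) {t : ℝ} (ht0 : 0 ≤ t) (ht1 : t ≤ 1) :
    ∃ u ∈ Fᗮ, ‖u‖ = 1 ∧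
      jointForm T u = AffineMap.lineMap (jointForm T x) (jointForm T c) t ∧ ⟪u, c⟫ = √t := by
  have hcx : FormOrthogonal T c x := formOrthogonal_of_mem_orthogonal_interactionSpan
    (Submodule.orthogonal_le le_sup_right hxF)
  let y : Fin 2 → H := ![x, c]
  let a : Fin 2 → ℝ := ![1 - t, t]
  have hpair : ((Finset.univ : Finset (Fin 2)) : Set (Fin 2)).Pairwise
      (Function.onFun (FormOrthogonal T) y) := by
    intro i _ l _ hil
    fin_cases i <;> fin_cases l
    exacts [(hil rfl).elim, hcx.symm, hcx, (hil rfl).elim]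
  have ha : ∀ i ∈ Finset.univ, 0 ≤ a i := fun i _ => by
    fin_cases i
    exacts [sub_nonneg.2 ht1, ht0]
  have hy : ∀ i ∈ Finset.univ, ‖y i‖ = 1 := fun i _ => by
    fin_cases i
    exacts [hx, hc]
  refine ⟨∑ i, √(a i) • y i, ?_, norm_sum_sqrt_smul_eq_one hpair hy ha ?_, ?_, ?_⟩
  · refine Submodule.sum_mem _ fun i _ => Submodule.smul_of_tower_mem _ _ ?_
    fin_cases i
    exacts [Submodule.orthogonal_le le_sup_left hxF, hcF]
  · simp [a]
  · rw [jointForm_sum_sqrt_smul hpair ha, Fin.sum_univ_two, AffineMap.lineMap_apply_module]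
    rfl
  · simp [y, a, inner_smul_left_eq_smul, hcx.symm.inner_eq_zero, hc]

section JointEssNumRange

variable {n : ℕ} {T : Fin n → H →L[ℂ] H}

lemma exists_pairwise_formOrthogonal {s : Finset (Fin n → ℂ)} (hs : ↑s ⊆ jointEssNumRange T)
    (G : Submodule ℂ H) [FiniteDimensional ℂ G] {η : ℝ} (hη : 0 < η) :
    ∃ x : (Fin n → ℂ) → H, (∀ w ∈ s, x w ∈ Gᗮ ∧ ‖x w‖ = 1 ∧ dist (jointForm T (x w)) w < η) ∧
      (s : Set (Fin n → ℂ)).Pairwise (Function.onFun (FormOrthogonal T) x) := by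
  induction s using Finset.induction_on with
  | empty => exact ⟨0, by simp, by simp⟩
  | insert w s hw ih =>
    rw [Finset.coe_insert, Set.insert_subset_iff] at hs
    obtain ⟨x, hx, hpair⟩ := ih hs.2
    obtain ⟨z, hzG, hz⟩ := exists_unit_mem_orthogonal_dist_jointForm_lt hs.1
      (G ⊔ s.sup fun v => interactionSpan T (x v)) hη
    have update_eq : ∀ v ∈ s, Function.update x w z v = x v := fun v hv =>
      Function.update_of_ne (ne_of_mem_of_not_mem hv hw) z x
    refine ⟨Function.update x w z, ?_, ?_⟩
    · rw [Finset.forall_mem_insert, Function.update_self]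
      refine ⟨⟨Submodule.orthogonal_le le_sup_left hzG, hz⟩, fun v hv => ?_⟩
      rw [update_eq v hv]
      exact hx v hv
    · rw [Finset.coe_insert, Set.pairwise_insert_of_notMem (Finset.mem_coe.not.2 hw)]
      refine ⟨fun v hv v' hv' hne => ?_, fun v hv => ?_⟩
      · simp only [Function.onFun, update_eq v hv, update_eq v' hv']
        exact hpair hv hv' hne
      · simp only [Function.onFun, update_eq v hv, Function.update_self]
        have hxz : FormOrthogonal T (x v) z :=
          formOrthogonal_of_mem_orthogonal_interactionSpan <| Submodule.orthogonal_le
            ((Finset.le_sup (f := fun v => interactionSpan T (x v)) hv).trans le_sup_right) hzG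
        exact ⟨hxz.symm, hxz⟩

variable {M : AffineSubspace ℝ (Fin n → ℂ)}

lemma exists_unit_mem_orthogonal_jointForm_eq (hW : jointNumRange T ⊆ M) {ν : Fin n → ℂ}
    (hν : ν ∈ M) (hνW : jointEssNumRange T ∈ nhdsWithin ν M) (G : Submodule ℂ H)
    [FiniteDimensional ℂ G] : ∃ x ∈ Gᗮ, ‖x‖ = 1 ∧ jointForm T x = ν := by
  obtain ⟨ε, hε, hball⟩ := Metric.mem_nhdsWithin_iff.1 hνW
  have hcompact : IsCompact (closedBall ν (ε / 2) ∩ M) :=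
    (isCompact_closedBall ν (ε / 2)).inter_right M.closed_of_finiteDimensional
  obtain ⟨t, htsub, ht, hcover⟩ := hcompact.finite_cover_balls (e := ε / 8) (by positivity)
  obtain ⟨x, hx, hpair⟩ := exists_pairwise_formOrthogonal (s := ht.toFinset) (T := T)
    (fun w hw => hball ⟨closedBall_subset_ball (half_lt_self hε) (htsub (by simpa using hw)).1,
      (htsub (by simpa using hw)).2⟩) G (show 0 < ε / 8 by positivity)
  simp only [Set.Finite.mem_toFinset, Set.Finite.coe_toFinset] at hx hpair
  have hνhull : ν ∈ convexHull ℝ (Set.range fun w : t => jointForm T (x w)) := by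
    have : Finite t := ht
    refine mem_convexHull_of_forall_exists_dist_le (M := M) (r := ε / 2) (η := ε / 4)
      (Set.finite_range _) ?_ hν (by positivity) (by linarith) ?_
    · rintro _ ⟨w, rfl⟩
      exact hW ⟨x w, (hx w w.2).2.1, fun _ => rfl⟩
    · intro v hv hvν
      obtain ⟨w, hw, hvw⟩ := Set.mem_iUnion₂.1 (hcover ⟨hvν, hv⟩)
      refine ⟨_, ⟨⟨w, hw⟩, rfl⟩, ?_⟩
      linarith [dist_triangle_right v (jointForm T (x w)) w, mem_ball.1 hvw, (hx w hw).2.2]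
  obtain ⟨y, hy, hy1, hyν⟩ := exists_unit_mem_span_jointForm_eq
    (x := fun w : t => x w) (fun w w' hne => hpair w.2 w'.2 (Subtype.coe_ne_coe.2 hne))
    (fun w => (hx w w.2).2.1) hνhull
  refine ⟨y, Submodule.span_le.2 ?_ hy, hy1, hyν⟩
  rintro _ ⟨w, rfl⟩
  exact (hx w w.2).1

lemma exists_unit_jointForm_eq_inner_eq_sqrt (hW : jointNumRange T ⊆ M) {lam : Fin n → ℂ}
    (hlam : lam ∈ M) {r : ℝ} (hr : ball lam r ∩ M ⊆ jointEssNumRange T) {t : ℝ} (ht0 : 0 ≤ t)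
    (ht : t ≤ 1 / 2) (htr : 4 * ‖T‖ * t < r) (F : Submodule ℂ H) [FiniteDimensional ℂ F] {c : H}
    (hcF : c ∈ Fᗮ) (hc : ‖c‖ = 1) :
    ∃ u ∈ Fᗮ, ‖u‖ = 1 ∧ jointForm T u = lam ∧ ⟪u, c⟫ = √t := by
  have hr0 : 0 < r := htr.trans_le' (by positivity)
  have ht1 : 0 < 1 - t := by linarith
  -- Chosen so that `lam = (1 - t) • ν + t • jointForm T c`.
  let ν : Fin n → ℂ := AffineMap.lineMap lam (jointForm T c) (-(t / (1 - t)))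
  have hνM : ν ∈ M := AffineMap.lineMap_mem _ hlam (hW ⟨c, hc, fun _ => rfl⟩)
  have hνr : ν ∈ ball lam r := by
    have hlam_norm : ‖lam‖ ≤ ‖T‖ :=
      norm_le_of_mem_jointEssNumRange (hr ⟨mem_ball_self hr0, hlam⟩)
    have hform_norm : ‖jointForm T c‖ ≤ ‖T‖ := by simpa [hc] using norm_jointForm_le T c
    have hdist : dist lam (jointForm T c) ≤ 2 * ‖T‖ := by
      linarith [dist_le_norm_add_norm lam (jointForm T c)]
    have hcoef : t / (1 - t) ≤ 2 * t := by
      rw [div_le_iff₀ ht1]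
      nlinarith
    calc dist ν lam = t / (1 - t) * dist lam (jointForm T c) := by
          rw [dist_lineMap_left, norm_neg, Real.norm_of_nonneg (by positivity)]
      _ ≤ 2 * t * (2 * ‖T‖) := by gcongr
      _ < r := by linarith
  have hνW : jointEssNumRange T ∈ nhdsWithin ν M :=
    mem_of_superset (inter_mem_nhdsWithin _ (isOpen_ball.mem_nhds hνr)) (Set.inter_comm _ _ ▸ hr)
  obtain ⟨x, hxG, hx, hxν⟩ :=
    exists_unit_mem_orthogonal_jointForm_eq hW hνM hνW (F ⊔ interactionSpan T c)
  obtain ⟨u, huF, hu, hform, hinner⟩ :=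
    exists_jointForm_eq_lineMap_inner_eq_sqrt hcF hc hxG hx ht0 (by linarith)
  refine ⟨u, huF, hu, ?_, hinner⟩
  rw [hform, hxν]
  simp only [ν, AffineMap.lineMap_apply_module]
  match_scalars <;> field_simp <;> ring

lemma exists_unit_jointForm_eq_le_norm_inner (hW : jointNumRange T ⊆ M) {lam : Fin n → ℂ}
    (hlam : lam ∈ M) {r : ℝ} (hr : ball lam r ∩ M ⊆ jointEssNumRange T) {t : ℝ} (ht0 : 0 ≤ t)
    (ht : t ≤ 1 / 2) (htr : 4 * ‖T‖ * t < r) (F : Submodule ℂ H) [FiniteDimensional ℂ F] (e : H) :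
    ∃ u ∈ Fᗮ, ‖u‖ = 1 ∧ jointForm T u = lam ∧
      t * ‖Fᗮ.starProjection e‖ ^ 2 ≤ ‖⟪u, e⟫‖ ^ 2 := by
  rcases eq_or_ne (Fᗮ.starProjection e) 0 with hb | hb
  · have hlamW : jointEssNumRange T ∈ nhdsWithin lam M := Metric.mem_nhdsWithin_iff.2
      ⟨r, htr.trans_le' (by positivity), hr⟩
    obtain ⟨u, huF, hu, hform⟩ := exists_unit_mem_orthogonal_jointForm_eq hW hlam hlamW F
    exact ⟨u, huF, hu, hform, by simp [hb]⟩
  obtain ⟨u, huF, hu, hform, hinner⟩ := exists_unit_jointForm_eq_inner_eq_sqrt hW hlam hr ht0 ht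
    htr F (c := NormedSpace.normalize (Fᗮ.starProjection e))
    (Submodule.smul_of_tower_mem _ _ (Fᗮ.starProjection_apply_mem e))
    (NormedSpace.norm_normalize_eq_one_iff.2 hb)
  refine ⟨u, huF, hu, hform, le_of_eq ?_⟩
  have inner_eq : ⟪u, e⟫ = ‖Fᗮ.starProjection e‖ • (√t : ℂ) := by
    rw [← hinner, ← inner_smul_right_eq_smul, NormedSpace.norm_smul_normalize,
      ← Submodule.inner_starProjection_left_eq_right, Submodule.starProjection_eq_self_iff.2 huF]
  rw [inner_eq, norm_smul, norm_norm, Complex.norm_real, Real.norm_of_nonneg (Real.sqrt_nonneg t),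
    mul_pow, Real.sq_sqrt ht0, mul_comm]

lemma exists_pos_forall_exists_unit_jointForm_eq_le_norm_inner (hW : jointNumRange T ⊆ M) :
    ∃ C > 0, ∀ lam ∈ M, jointEssNumRange T ∈ nhdsWithin lam M →
      ∀ (F : Submodule ℂ H) [FiniteDimensional ℂ F] (e : H), ∃ u ∈ Fᗮ, ‖u‖ = 1 ∧
        jointForm T u = lam ∧ infDist lam (M \ jointEssNumRange T) / C *
          ‖Fᗮ.starProjection e‖ ^ 2 ≤ ‖⟪u, e⟫‖ ^ 2 := by
  set A : Set (Fin n → ℂ) := M \ jointEssNumRange T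
  let C := 4 * ‖T‖ + 2 * (infDist 0 A + ‖T‖) + 1
  have hA0 : 0 ≤ infDist 0 A := infDist_nonneg
  have hC : 0 < C := by positivity
  refine ⟨C, hC, fun lam hlam hlamW F _ e => ?_⟩
  obtain ⟨ε, hε, hball⟩ := Metric.mem_nhdsWithin_iff.1 hlamW
  have hlam_norm : ‖lam‖ ≤ ‖T‖ :=
    norm_le_of_mem_jointEssNumRange (hball ⟨mem_ball_self hε, hlam⟩)
  have hinfDist : infDist lam A ≤ infDist 0 A + ‖T‖ := by
    linarith [infDist_le_infDist_add_dist (s := A) (x := lam) (y := 0), dist_zero_right lam]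
  have hr : ball lam (max ε (infDist lam A)) ∩ M ⊆ jointEssNumRange T := by
    rintro y ⟨hy, hyM⟩
    rcases lt_max_iff.1 (mem_ball.1 hy) with hyε | hyA
    · exact hball ⟨hyε, hyM⟩
    · by_contra hyW
      exact disjoint_ball_infDist.le_bot ⟨hyA, hyM, hyW⟩
  have htr : 4 * ‖T‖ * (infDist lam A / C) < max ε (infDist lam A) := by
    rcases (infDist_nonneg (x := lam) (s := A)).eq_or_lt with hzero | hpos
    · simp [← hzero, hε]
    · refine lt_max_of_lt_right ?_
      rw [mul_div_assoc', div_lt_iff₀ hC, mul_comm]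
      exact mul_lt_mul_of_pos_left (by simp only [C]; linarith [norm_nonneg T]) hpos
  exact exists_unit_jointForm_eq_le_norm_inner hW hlam hr (div_nonneg infDist_nonneg hC.le)
    ((div_le_iff₀ hC).2 (by simp only [C]; linarith [norm_nonneg T])) htr F e

end JointEssNumRange

end Complete

end JointForm

/-- `ℂ^n` is viewed as a real affine space (i.e. as `ℝ^{2n}`); `M` is the smallest real
affine subspace containing the joint numerical range `W(𝒯)`.  A sequence in the interior
of `W_e(𝒯)` relative to `M` satisfying the Blaschke-type condition
`∑ₖ dist(λ_k, M ∖ W_e(𝒯)) = ∞` is a diagonal of `𝒯`. -/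
theorem stmt_1 {H : Type*} [NormedAddCommGroup H] [InnerProductSpace ℂ H]
    [CompleteSpace H] [TopologicalSpace.SeparableSpace H]
    (hdim : ¬ FiniteDimensional ℂ H)
    {n : ℕ} (T : Fin n → H →L[ℂ] H)
    (M : AffineSubspace ℝ (Fin n → ℂ))
    (hM : M = affineSpan ℝ (jointNumRange T))
    (lam : ℕ → Fin n → ℂ)
    -- each `λ_k` lies in the interior of `W_e(𝒯)` relative to `M`
    (hmem : ∀ k, lam k ∈ (M : Set (Fin n → ℂ)) ∧ ∃ ε > 0, ∀ y ∈ (M : Set (Fin n → ℂ)),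
      dist y (lam k) < ε → y ∈ jointEssNumRange T)
    (hblaschke : Tendsto
      (fun N => ∑ k ∈ Finset.range N,
        Metric.infDist (lam k) ((M : Set (Fin n → ℂ)) \ jointEssNumRange T))
      atTop atTop) :
    ∃ u : HilbertBasis ℕ ℂ H, ∀ k j, ⟪(T j) (u k), u k⟫ = lam k j := by
  have hinterior : ∀ k, jointEssNumRange T ∈ nhdsWithin (lam k) M := fun k => by
    obtain ⟨-, ε, hε, hball⟩ := hmem k
    exact Metric.mem_nhdsWithin_iff.2 ⟨ε, hε, fun y hy => hball y hy.2 hy.1⟩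
  obtain ⟨C, hC, hcapture⟩ := exists_pos_forall_exists_unit_jointForm_eq_le_norm_inner
    (hM ▸ subset_affineSpan ℝ (jointNumRange T))
  rw [← not_summable_iff_tendsto_nat_atTop_of_nonneg fun k => infDist_nonneg,
    ← summable_div_const_iff hC.ne'] at hblaschke
  have ht : 0 ≤ fun k => infDist (lam k) (M \ jointEssNumRange T) / C :=
    fun k => div_nonneg infDist_nonneg hC.le
  obtain ⟨m, hm⟩ := exists_not_summable_indicator_preimage_singleton ht hblaschke
  let e := TopologicalSpace.denseSeq H
  obtain ⟨u, hu, hcaptured⟩ := exists_orthonormal_seq (P := fun k F u => jointForm T u = lam k ∧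
      infDist (lam k) (M \ jointEssNumRange T) / C * ‖Fᗮ.starProjection (e (m k))‖ ^ 2
        ≤ ‖⟪u, e (m k)⟫‖ ^ 2)
    fun k F _ => hcapture (lam k) (hmem k).1 (hinterior k) F (e (m k))
  have hcomplete : (Submodule.span ℂ (Set.range u))ᗮ = ⊥ :=
    orthogonal_span_range_eq_bot_of_not_summable_indicator hu
      (TopologicalSpace.denseRange_denseSeq H) ht hm fun k => (hcaptured k).2
  refine ⟨HilbertBasis.mkOfOrthogonalEqBot hu hcomplete, fun k j => ?_⟩
  rw [HilbertBasis.coe_mkOfOrthogonalEqBot]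
  exact congrFun (hcaptured k).1 j
end

section
/- Let H be a complex separable infinite-dimensional Hilbert space and S = (S_1, …, S_s) an s-tuple of bounded selfadjoint operators on H. Let (λ_k)_{k≥1} ⊂ ℝ^s, with λ_k = (λ_{k,1}, …, λ_{k,s}), be contained in the interior of W_e(S) relative to ℝ^s, and suppose there exists an orthonormal basis (u_k)_{k≥1} of H with ⟨S_j u_k, u_k⟩ = λ_{k,j} for all k and j. Let α_0, α_1, …, α_s be real numbers with (α_1, …, α_s) ≠ (0, …, 0), set V = α_0 I + ∑_{j=1}^s α_j S_j and a = inf{t : t ∈ W(V)}. Then ∑_{k=1}^∞ (α_0 − a + ∑_{j=1}^s α_j λ_{k,j}) = ∞. -/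
open Filter Metric
open scoped ComplexInnerProductSpace

/-!
Put `T = V - a I`. It is positive, and its diagonal entries in the basis `u` are the nonnegative
numbers `α₀ - a + ∑ j, α j * lam k j`. If their sum were finite, then `T` would be trace class:
writing `⟪T x, x⟫ = ‖√T x‖²`, Parseval's identity in the basis `u` and Bessel's inequality for an
orthonormal sequence `x` give `∑ₘ ⟪T xₘ, xₘ⟫ ≤ ∑ₖ ⟪T uₖ, uₖ⟫`, so `⟪T xₘ, xₘ⟫ → 0`. Hence the affine
form `μ ↦ α₀ - a + ∑ j, α j * μ j` vanishes on the joint essential numerical range, which is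
impossible when that set affinely spans `ℝ^s` and `α ≠ 0`.
-/

theorem tendsto_sum_atTop_of_not_summable {ι : Type*} {f : ι → ℝ} (hf : ∀ i, 0 ≤ f i)
    (hnot : ¬ Summable f) : Tendsto (fun F : Finset ι => ∑ i ∈ F, f i) atTop atTop :=
  (tendsto_atTop_of_monotone (Finset.sum_mono_set_of_nonneg hf)).resolve_right
    fun ⟨l, hl⟩ => hnot ⟨l, hl⟩

theorem linearMap_eq_zero_of_eqOn_const {k E F : Type*} [Ring k] [AddCommGroup E] [Module k E]
    [AddCommGroup F] [Module k F] {s : Set E} (hs : affineSpan k s = ⊤) {f : E →ₗ[k] F} {c : F}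
    (hf : ∀ x ∈ s, f x = c) : f = 0 := by
  have hconst : f.toAffineMap = AffineMap.const k E c := AffineMap.ext_on hs hf
  simpa using congrArg AffineMap.linear hconst

theorem eq_zero_of_sum_mul_eq_const {k ι : Type*} [CommRing k] [Fintype ι] {s : Set (ι → k)}
    (hs : affineSpan k s = ⊤) {α : ι → k} {c : k} (hα : ∀ μ ∈ s, ∑ j, α j * μ j = c) : α = 0 := by
  have hzero : dotProductBilin k k α = 0 :=
    linearMap_eq_zero_of_eqOn_const hs hα
  exact dotProduct_eq_zero α fun μ => DFunLike.congr_fun hzero μ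

section RCLike

variable {𝕜 E F : Type*} [RCLike 𝕜] [NormedAddCommGroup E] [InnerProductSpace 𝕜 E]
  [NormedAddCommGroup F] [InnerProductSpace 𝕜 F]

theorem hasSum_sq_norm_inner_hilbertBasis {ι : Type*} (b : HilbertBasis ι 𝕜 E) (y : E) :
    HasSum (fun k => ‖inner 𝕜 (b k) y‖ ^ 2) (‖y‖ ^ 2) := by
  have hparseval := RCLike.reCLM.hasSum (b.hasSum_inner_mul_inner y y)
  simpa only [Function.comp_def, RCLike.reCLM_apply, inner_mul_symm_re_eq_norm, norm_mul,
    norm_inner_symm y, ← sq, inner_self_eq_norm_sq] using hparseval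

theorem summable_sq_norm_apply_orthonormal [CompleteSpace E] [CompleteSpace F]
    {ι κ : Type*} (b : HilbertBasis ι 𝕜 F) (A : E →L[𝕜] F)
    (hA : Summable fun k => ‖A.adjoint (b k)‖ ^ 2) {x : κ → E} (hx : Orthonormal 𝕜 x) :
    Summable fun m => ‖A (x m)‖ ^ 2 := by
  refine summable_of_sum_le (c := ∑' k, ‖A.adjoint (b k)‖ ^ 2) (fun m => by positivity) fun M => ?_
  have hparseval : HasSum (fun k => ∑ m ∈ M, ‖inner 𝕜 (b k) (A (x m))‖ ^ 2)
      (∑ m ∈ M, ‖A (x m)‖ ^ 2) :=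
    hasSum_sum fun m _ => hasSum_sq_norm_inner_hilbertBasis b (A (x m))
  refine hasSum_le (fun k => ?_) hparseval hA.hasSum
  simpa only [← A.adjoint_inner_left, norm_inner_symm (A.adjoint (b k))] using
    hx.sum_inner_products_le (A.adjoint (b k)) (s := M)

theorem isPositive_sub_smul_one {T : E →L[𝕜] E} (hT : T.IsSymmetric) {a : ℝ}
    (ha : ∀ x, ‖x‖ = 1 → a ≤ T.reApplyInnerSelf x) : (T - (a : 𝕜) • 1).IsPositive := by
  have hone : (((a : 𝕜) • 1 : E →L[𝕜] E) : E →ₗ[𝕜] E).IsSymmetric :=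
    LinearMap.IsSymmetric.id.smul (RCLike.conj_ofReal a)
  refine ⟨hT.sub hone, fun x => ?_⟩
  have hlower : a * ‖x‖ ^ 2 ≤ T.reApplyInnerSelf x := by
    rcases eq_or_ne x 0 with rfl | hx
    · simp [ContinuousLinearMap.reApplyInnerSelf_apply]
    have hunit := ha _ (norm_smul_inv_norm (𝕜 := 𝕜) hx)
    rw [T.reApplyInnerSelf_smul, norm_inv, RCLike.norm_ofReal, abs_norm, inv_pow,
      inv_mul_eq_div] at hunit
    exact (le_div_iff₀ (by positivity)).1 hunit
  simpa [ContinuousLinearMap.reApplyInnerSelf_apply, inner_sub_left, inner_smul_left,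
    inner_self_eq_norm_sq] using hlower

end RCLike

section Complex

variable {H : Type*} [NormedAddCommGroup H] [InnerProductSpace ℂ H]

/-- The set of real values of the form `⟪T x, x⟫` on the unit sphere of `H`; for a selfadjoint
operator `T` this is the whole numerical range `W(T)`. -/
def realNumericalRange (T : H →L[ℂ] H) : Set ℝ :=
  {t | ∃ x : H, ‖x‖ = 1 ∧ ⟪T x, x⟫ = (t : ℂ)}

theorem bddBelow_realNumericalRange (T : H →L[ℂ] H) : BddBelow (realNumericalRange T) := by
  refine ⟨-‖T‖, ?_⟩
  rintro t ⟨x, hx, ht⟩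
  refine neg_le_of_abs_le ?_
  calc |t| = ‖⟪T x, x⟫‖ := by rw [ht, Complex.norm_real, Real.norm_eq_abs]
    _ ≤ ‖T x‖ * ‖x‖ := norm_inner_le_norm _ _
    _ ≤ ‖T‖ := by simpa only [hx, mul_one] using T.le_opNorm x

theorem isPositive_sub_sInf_realNumericalRange {T : H →L[ℂ] H} (hT : T.IsSymmetric) :
    (T - ((sInf (realNumericalRange T) : ℝ) : ℂ) • 1).IsPositive :=
  isPositive_sub_smul_one hT fun x hx =>
    csInf_le (bddBelow_realNumericalRange T) ⟨x, hx, (hT.coe_re_inner_apply_self x).symm⟩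

theorem reApplyInnerSelf_eq_norm_sqrt_sq [CompleteSpace H] {T : H →L[ℂ] H} (hT : T.IsPositive)
    (x : H) : T.reApplyInnerSelf x = ‖CFC.sqrt T x‖ ^ 2 := by
  have hsqrt : CFC.sqrt T * CFC.sqrt T = T :=
    CFC.sqrt_mul_sqrt_self T (T.nonneg_iff_isPositive.2 hT)
  have hsqrt_pos : (CFC.sqrt T).IsPositive :=
    (ContinuousLinearMap.nonneg_iff_isPositive _).1 (CFC.sqrt_nonneg T)
  calc T.reApplyInnerSelf x = (⟪(CFC.sqrt T * CFC.sqrt T) x, x⟫).re := by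
        rw [hsqrt, T.reApplyInnerSelf_apply]; rfl
    _ = (⟪CFC.sqrt T x, CFC.sqrt T x⟫).re := by
        rw [mul_apply_eq_comp, hsqrt_pos.inner_left_eq_inner_right]
    _ = ‖CFC.sqrt T x‖ ^ 2 := inner_self_eq_norm_sq (𝕜 := ℂ) _

theorem summable_reApplyInnerSelf_orthonormal [CompleteSpace H] {ι κ : Type*}
    (b : HilbertBasis ι ℂ H) {T : H →L[ℂ] H} (hT : T.IsPositive)
    (hb : Summable fun k => T.reApplyInnerSelf (b k)) {x : κ → H} (hx : Orthonormal ℂ x) :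
    Summable fun m => T.reApplyInnerSelf (x m) := by
  have hadj : (CFC.sqrt T).adjoint = CFC.sqrt T := (CFC.sqrt_nonneg T).isSelfAdjoint.adjoint_eq
  simp only [reApplyInnerSelf_eq_norm_sqrt_sq hT] at hb ⊢
  exact summable_sq_norm_apply_orthonormal b (CFC.sqrt T) (by rwa [hadj]) hx

/-- The operator `c I + ∑ j, α j S j` with real coefficients, a family that contains both
`V` (`c = α₀`) and `V - a I` (`c = α₀ - a`). -/
def realAffineCombination {ι : Type*} [Fintype ι] (S : ι → H →L[ℂ] H) (c : ℝ) (α : ι → ℝ) :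
    H →L[ℂ] H :=
  (c : ℂ) • 1 + ∑ j, (α j : ℂ) • S j

namespace realAffineCombination

variable {ι : Type*} [Fintype ι] {S : ι → H →L[ℂ] H} {c : ℝ} {α : ι → ℝ}

theorem sub_smul_one (a : ℝ) :
    realAffineCombination S c α - (a : ℂ) • 1 = realAffineCombination S (c - a) α := by
  simp only [realAffineCombination, Complex.ofReal_sub, sub_smul]
  abel

theorem isSelfAdjoint [CompleteSpace H] (hS : ∀ j, IsSelfAdjoint (S j)) :
    IsSelfAdjoint (realAffineCombination S c α) :=
  (IsSelfAdjoint.smul (Complex.conj_ofReal c) (.one _)).add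
    (isSelfAdjoint_sum _ fun j _ => .smul (Complex.conj_ofReal (α j)) (hS j))

theorem reApplyInnerSelf_of_norm_eq_one {x : H} (hx : ‖x‖ = 1) :
    (realAffineCombination S c α).reApplyInnerSelf x = c + ∑ j, α j * (⟪S j x, x⟫).re := by
  simp [-Complex.coe_smul, realAffineCombination, ContinuousLinearMap.reApplyInnerSelf_apply,
    inner_add_left, inner_smul_left, sum_inner, inner_self_eq_norm_sq_to_K, hx]

end realAffineCombination

theorem add_sum_mul_eq_zero_of_mem_jointEssNumRangeReal [CompleteSpace H] {ι : Type*} {s : ℕ}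
    {S : Fin s → H →L[ℂ] H} {c : ℝ} {α : Fin s → ℝ} (b : HilbertBasis ι ℂ H)
    (hpos : (realAffineCombination S c α).IsPositive)
    (hb : Summable fun k => (realAffineCombination S c α).reApplyInnerSelf (b k))
    {μ : Fin s → ℝ} (hμ : μ ∈ jointEssNumRangeReal S) : c + ∑ j, α j * μ j = 0 := by
  obtain ⟨x, hx, hlim⟩ := hμ
  have hzero : Tendsto (fun m => (realAffineCombination S c α).reApplyInnerSelf (x m)) atTop
      (nhds 0) := (summable_reApplyInnerSelf_orthonormal b hpos hb hx).tendsto_atTop_zero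
  have hre : ∀ j, Tendsto (fun m => (⟪S j (x m), x m⟫).re) atTop (nhds (μ j)) := fun j =>
    (Complex.continuous_re.tendsto _).comp (hlim j)
  simp only [realAffineCombination.reApplyInnerSelf_of_norm_eq_one (hx.norm_eq_one _)] at hzero
  exact tendsto_nhds_unique
    (tendsto_const_nhds.add (tendsto_finsetSum _ fun j _ => (hre j).const_mul (α j))) hzero

theorem stmt_6_general [CompleteSpace H] {ι : Type*} {s : ℕ} (S : Fin s → H →L[ℂ] H)
    (hsa : ∀ j, IsSelfAdjoint (S j)) (hspan : affineSpan ℝ (jointEssNumRangeReal S) = ⊤)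
    (lam : ι → Fin s → ℝ) (u : HilbertBasis ι ℂ H)
    (hu : ∀ k j, ⟪(S j) (u k), u k⟫ = (lam k j : ℂ))
    (α₀ : ℝ) (α : Fin s → ℝ) (hα : α ≠ 0)
    (a : ℝ) (ha : a = sInf (realNumericalRange (realAffineCombination S α₀ α))) :
    Tendsto (fun F : Finset ι => ∑ k ∈ F, (α₀ - a + ∑ j, α j * lam k j)) atTop atTop := by
  have hpos : (realAffineCombination S (α₀ - a) α).IsPositive := by
    rw [← realAffineCombination.sub_smul_one, ha]
    exact isPositive_sub_sInf_realNumericalRange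
      (realAffineCombination.isSelfAdjoint hsa).isSymmetric
  have hdiag (k : ι) : (realAffineCombination S (α₀ - a) α).reApplyInnerSelf (u k) =
      α₀ - a + ∑ j, α j * lam k j := by
    simp only [realAffineCombination.reApplyInnerSelf_of_norm_eq_one (u.orthonormal.norm_eq_one k),
      hu, Complex.ofReal_re]
  simp only [← hdiag]
  refine tendsto_sum_atTop_of_not_summable (fun k => hpos.2 (u k)) fun hsum => hα ?_
  exact eq_zero_of_sum_mul_eq_const hspan fun μ hμ =>
    eq_neg_of_add_eq_zero_right (add_sum_mul_eq_zero_of_mem_jointEssNumRangeReal u hpos hsum hμ)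

end Complex

/-- A necessary condition on diagonals of tuples of selfadjoint operators:
for `V = α₀ I + ∑ α_j S_j` and `a = inf W(V)` one has
`∑ₖ (α₀ - a + ∑_j α_j λ_{k,j}) = ∞`. -/
theorem stmt_6 {H : Type*} [NormedAddCommGroup H] [InnerProductSpace ℂ H]
    [CompleteSpace H] [TopologicalSpace.SeparableSpace H]
    (hdim : ¬ FiniteDimensional ℂ H)
    {s : ℕ} (S : Fin s → H →L[ℂ] H) (hsa : ∀ j, IsSelfAdjoint (S j))
    (lam : ℕ → Fin s → ℝ)
    (hmem : ∀ k, lam k ∈ interior (jointEssNumRangeReal S))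
    (u : HilbertBasis ℕ ℂ H) (hu : ∀ k j, ⟪(S j) (u k), u k⟫ = (lam k j : ℂ))
    (α₀ : ℝ) (α : Fin s → ℝ) (hα : α ≠ 0)
    (V : H →L[ℂ] H) (hV : V = (α₀ : ℂ) • (1 : H →L[ℂ] H) + ∑ j, (α j : ℂ) • S j)
    (a : ℝ) (ha : a = sInf {t : ℝ | ∃ x : H, ‖x‖ = 1 ∧ ⟪V x, x⟫ = (t : ℂ)}) :
    Tendsto (fun N => ∑ k ∈ Finset.range N, (α₀ - a + ∑ j, α j * lam k j))
      atTop atTop := by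
  have hspan : affineSpan ℝ (jointEssNumRangeReal S) = ⊤ :=
    affineSpan_eq_top_of_nonempty_interior
      ⟨lam 0, interior_mono (subset_convexHull ℝ _) (hmem 0)⟩
  subst hV
  exact (stmt_6_general S hsa hspan lam u hu α₀ α hα a ha).comp tendsto_finset_range
end
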